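/- arXiv:1409.3583 — 2 statements merged into one kernel-verified Lean document; each statement's English description precedes it below -/
import Mathlib

section
/- Let G be a finite simple graph that is gap-free and cricket-free, with nonzero 4-path ideal I_4(G). Then I_4(G) has a linear minimal free resolution, i.e., reg(I_4(G)) = 4. -/
open MvPolynomial

/-! Graph-theoretic definitions -/

/-- A list of vertices is a path in `G`: consecutive vertices are adjacent and all
vertices are distinct. -/
def SimpleGraph.IsPathList {V : Type*} (G : SimpleGraph V) (l : List V) : Prop :=
  l.Chain' G.Adj ∧ l.Nodup

/-- The `t`-path ideal of a graph: the ideal generated by the monomials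
`x_{v_1} ⋯ x_{v_t}` where `v_1 ⋯ v_t` is a path on `t` distinct vertices of `G`. -/
noncomputable def pathIdeal {V K : Type*} [CommRing K] (G : SimpleGraph V) (t : ℕ) :
    Ideal (MvPolynomial V K) :=
  Ideal.span { p | ∃ l : List V, G.IsPathList l ∧ l.length = t ∧ p = (l.map X).prod }

/-- The edge ideal of a graph. -/
noncomputable def edgeIdeal {V K : Type*} [CommRing K] (G : SimpleGraph V) :
    Ideal (MvPolynomial V K) :=
  Ideal.span { p | ∃ u v, G.Adj u v ∧ p = X u * X v }

/-- `G` is gap-free: any two vertex-disjoint edges are joined by an edge. -/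
def SimpleGraph.GapFree {V : Type*} (G : SimpleGraph V) : Prop :=
  ∀ a b c d : V, G.Adj a b → G.Adj c d → a ≠ c → a ≠ d → b ≠ c → b ≠ d →
    (G.Adj a c ∨ G.Adj a d ∨ G.Adj b c ∨ G.Adj b d)

/-- `G` is claw-free: it has no induced `K_{1,3}`. -/
def SimpleGraph.ClawFree {V : Type*} (G : SimpleGraph V) : Prop :=
  ∀ v a b c : V, G.Adj v a → G.Adj v b → G.Adj v c → a ≠ b → a ≠ c → b ≠ c →
    (G.Adj a b ∨ G.Adj a c ∨ G.Adj b c)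

/-- `G` is cricket-free: it has no induced cricket. -/
def SimpleGraph.CricketFree {V : Type*} (G : SimpleGraph V) : Prop :=
  ¬ ∃ w1 w2 w3 w4 w5 : V,
      w1 ≠ w2 ∧ w1 ≠ w3 ∧ w1 ≠ w4 ∧ w1 ≠ w5 ∧ w2 ≠ w3 ∧ w2 ≠ w4 ∧ w2 ≠ w5 ∧
      w3 ≠ w4 ∧ w3 ≠ w5 ∧ w4 ≠ w5 ∧
      G.Adj w1 w3 ∧ G.Adj w2 w3 ∧ G.Adj w3 w4 ∧ G.Adj w3 w5 ∧ G.Adj w4 w5 ∧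
      ¬ G.Adj w1 w2 ∧ ¬ G.Adj w1 w4 ∧ ¬ G.Adj w1 w5 ∧ ¬ G.Adj w2 w4 ∧ ¬ G.Adj w2 w5

/-- `w : Fin n → V` is an induced cycle of length `n` in `H`. -/
def SimpleGraph.IsInducedCycle {V : Type*} (H : SimpleGraph V) {n : ℕ} (w : Fin n → V) :
    Prop :=
  3 ≤ n ∧ Function.Injective w ∧
    ∀ i j : Fin n, H.Adj (w i) (w j) ↔
      ((j : ℕ) = ((i : ℕ) + 1) % n ∨ (i : ℕ) = ((j : ℕ) + 1) % n)

/-- A graph is chordal if it has no induced cycle of length at least four. -/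
def SimpleGraph.Chordal {V : Type*} (H : SimpleGraph V) : Prop :=
  ∀ (n : ℕ), 4 ≤ n → ∀ w : Fin n → V, ¬ H.IsInducedCycle w

/-! Monomial ideals, graded Betti numbers via the Taylor complex, and
Castelnuovo–Mumford regularity. -/

/-- The monomial ideal generated by the monomials with exponent vectors `gens`. -/
noncomputable def monomialSpan {V K : Type*} [CommRing K] {k : ℕ}
    (gens : Fin k → (V →₀ ℕ)) : Ideal (MvPolynomial V K) :=
  Ideal.span (Set.range fun i => monomial (gens i) (1 : K))

/-- The total degree of an exponent vector. -/
def monomialDegree {V : Type*} (m : V →₀ ℕ) : ℕ := m.sum fun _ n => n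

/-- `m` is a minimal monomial generator of the monomial ideal `I`. -/
def IsMinimalMonomialGen {V K : Type*} [CommRing K] (I : Ideal (MvPolynomial V K))
    (m : V →₀ ℕ) : Prop :=
  monomial m (1 : K) ∈ I ∧ ∀ m' : V →₀ ℕ, m' ≤ m → m' ≠ m → monomial m' (1 : K) ∉ I

/-- The lcm of the monomials `gens i`, `i ∈ T`. -/
noncomputable def taylorLcm {V : Type*} {k : ℕ} (gens : Fin k → (V →₀ ℕ))
    (T : Finset (Fin k)) : V →₀ ℕ :=
  T.sup gens

open Classical in
/-- The boundary of a basis element of the Taylor complex of `gens`, tensored with the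
residue field `K`: only the terms where the lcm is unchanged survive. -/
noncomputable def taylorBoundary {V K : Type*} [Field K] {k : ℕ}
    (gens : Fin k → (V →₀ ℕ)) (T : Finset (Fin k)) : Finset (Fin k) →₀ K :=
  ∑ t ∈ T, if taylorLcm gens (T.erase t) = taylorLcm gens T then
      ((-1 : K) ^ (T.filter fun s => s < t).card) • Finsupp.single (T.erase t) (1 : K)
    else 0

/-- The differential of the Taylor complex of `gens` tensored with `K`. -/
noncomputable def taylorDiff {V K : Type*} [Field K] {k : ℕ}
    (gens : Fin k → (V →₀ ℕ)) : (Finset (Fin k) →₀ K) →ₗ[K] (Finset (Fin k) →₀ K) :=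
  Finsupp.lsum K fun T =>
    LinearMap.toSpanSingleton K (Finset (Fin k) →₀ K) (taylorBoundary gens T)

/-- The graded piece of the Taylor complex in homological degree `i` and internal
degree `j`. -/
noncomputable def taylorPiece {V K : Type*} [Field K] {k : ℕ}
    (gens : Fin k → (V →₀ ℕ)) (i j : ℕ) : Submodule K (Finset (Fin k) →₀ K) :=
  Submodule.span K { f | ∃ T : Finset (Fin k), T.card = i ∧
    monomialDegree (taylorLcm gens T) = j ∧ f = Finsupp.single T (1 : K) }

/-- Nonvanishing of the degree-`j` part of the `i`-th homology of the Taylor complex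
of `gens` tensored with `K`; since the Taylor complex is a graded free resolution of
`S/I` (where `I` is the ideal generated by the monomials `gens`), this says exactly
that `Tor_i^S(S/I, K)_j ≠ 0`. -/
noncomputable def taylorHomologyNonzero {V K : Type*} [Field K] {k : ℕ}
    (gens : Fin k → (V →₀ ℕ)) (i j : ℕ) : Prop :=
  ¬ (LinearMap.ker (taylorDiff (K := K) gens) ⊓ taylorPiece (K := K) gens i j ≤
      Submodule.map (taylorDiff (K := K) gens) (taylorPiece (K := K) gens (i + 1) j))

/-- For a monomial ideal `I`, `Tor_i^S(I, K)_j ≠ 0`.  (Since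
`Tor_i^S(I,K) ≅ Tor_{i+1}^S(S/I,K)`, this is computed from the Taylor complex on any
family of monomial generators of `I`.) -/
def IdealTorNonzero {V K : Type*} [Field K] (I : Ideal (MvPolynomial V K))
    (i j : ℕ) : Prop :=
  ∃ (k : ℕ) (gens : Fin k → (V →₀ ℕ)), I = monomialSpan gens ∧
    taylorHomologyNonzero (K := K) gens (i + 1) j

/-- The Castelnuovo–Mumford regularity of a monomial ideal `I`:
`reg I = max { j - i : Tor_i^S(I, K)_j ≠ 0 }`. -/
noncomputable def reg {V K : Type*} [Field K] (I : Ideal (MvPolynomial V K)) : ℕ :=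
  sSup { d | ∃ i j : ℕ, IdealTorNonzero I i j ∧ d = j - i }

namespace TV
set_option linter.unusedSectionVars false
open Finsupp

section Chains
variable {ι M K : Type*} [LinearOrder ι] [SemilatticeSup M] [OrderBot M] [Field K]

theorem map_supp {α β : Type*} (F : (α →₀ K) →ₗ[K] (β →₀ K)) {s : Set α} {t : Set β}
    (h : ∀ T ∈ s, F (single T 1) ∈ supported K K t) {z : α →₀ K} (hz : z ∈ supported K K s) :
    F z ∈ supported K K t := by
  rw [supported_eq_span_single] at hz
  induction hz using Submodule.span_induction with
  | mem x hx => obtain ⟨T, hT, rfl⟩ := hx; exact h T hT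
  | zero => simp
  | add x y _ _ hx hy => rw [map_add]; exact Submodule.add_mem _ hx hy
  | smul a x _ hx => rw [map_smul]; exact Submodule.smul_mem _ _ hx

theorem eq_supp {α β : Type*} (F F' : (α →₀ K) →ₗ[K] (β →₀ K)) {s : Set α}
    (h : ∀ T ∈ s, F (single T 1) = F' (single T 1)) {z : α →₀ K} (hz : z ∈ supported K K s) :
    F z = F' z := by
  rw [supported_eq_span_single] at hz
  induction hz using Submodule.span_induction with
  | mem x hx => obtain ⟨T, hT, rfl⟩ := hx; exact h T hT
  | zero => simp
  | add x y _ _ hx hy => rw [map_add, map_add, hx, hy]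
  | smul a x _ hx => rw [map_smul, map_smul, hx]

def LL (g : ι → M) (b : M) (T : Finset ι) : M := b ⊔ T.sup g

def sg (u : ι) (T : Finset ι) : K := (-1) ^ (T.filter (· < u)).card

open Classical in
noncomputable def bdT (g : ι → M) (b : M) (T : Finset ι) : Finset ι →₀ K :=
  ∑ t ∈ T, if LL g b (T.erase t) = LL g b T then single (T.erase t) (sg t T) else 0

noncomputable def bd (g : ι → M) (b : M) : (Finset ι →₀ K) →ₗ[K] (Finset ι →₀ K) :=
  Finsupp.linearCombination K (bdT g b)

noncomputable def ph (u : ι) : (Finset ι →₀ K) →ₗ[K] (Finset ι →₀ K) :=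
  Finsupp.linearCombination K (fun T => single (insert u T) (sg u T))

open Classical in
noncomputable def ps (u : ι) : (Finset ι →₀ K) →ₗ[K] (Finset ι →₀ K) :=
  Finsupp.linearCombination K (fun T => if u ∈ T then single (T.erase u) (sg u T) else 0)

open Classical in
noncomputable def pr (g : ι → M) (b b' : M) : (Finset ι →₀ K) →ₗ[K] (Finset ι →₀ K) :=
  Finsupp.linearCombination K (fun T => if LL g b T = LL g b' T then single T 1 else 0)

theorem bd_single (g : ι → M) (b : M) (T : Finset ι) :
    bd (K := K) g b (single T 1) = bdT g b T := by simp [bd]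
theorem ph_single (u : ι) (T : Finset ι) :
    ph (K := K) u (single T 1) = single (insert u T) (sg u T) := by simp [ph]
open Classical in
theorem ps_single (u : ι) (T : Finset ι) :
    ps (K := K) u (single T 1) = if u ∈ T then single (T.erase u) (sg u T) else 0 := by simp [ps]
open Classical in
theorem pr_single (g : ι → M) (b b' : M) (T : Finset ι) :
    pr (K := K) g b b' (single T 1) = if LL g b T = LL g b' T then single T 1 else 0 := by
  simp [pr]

theorem sg_sq (u : ι) (T : Finset ι) : sg (K := K) u T * sg u T = 1 := by
  simp [sg, ← pow_add, ← two_mul]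

theorem sg_insert_self (u : ι) (T : Finset ι) : sg (K := K) u (insert u T) = sg u T := by
  simp [sg, Finset.filter_insert]

/-- key sign identity -/
theorem sg_swap (u t : ι) (T : Finset ι) (hu : u ∉ T) (ht : t ∈ T) :
    sg (K := K) u T * sg t (insert u T) = - (sg t T * sg u (T.erase t)) := by
  have hne : u ≠ t := fun h => hu (h ▸ ht)
  unfold sg
  rw [Finset.filter_insert, Finset.filter_erase]
  rcases lt_or_gt_of_ne hne with h | h
  · rw [if_pos h, Finset.card_insert_of_notMem (by simp [hu]),
      Finset.erase_eq_of_notMem (by simp [h.le])]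
    ring
  · rw [if_neg (not_lt.2 h.le)]
    have : t ∈ T.filter (· < u) := by simp [ht, h]
    rw [← Finset.card_erase_add_one this]
    ring

theorem LL_insert (g : ι → M) (b : M) (u : ι) (T : Finset ι) :
    LL g b (insert u T) = LL g (b ⊔ g u) T := by
  simp [LL, Finset.sup_insert, sup_assoc]

theorem LL_mono_b (g : ι → M) {b b' : M} (h : b ≤ b') (T : Finset ι) : LL g b T ≤ LL g b' T :=
  sup_le_sup_right h _

theorem LL_mono_T (g : ι → M) (b : M) {T T' : Finset ι} (h : T ⊆ T') : LL g b T ≤ LL g b T' :=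
  sup_le_sup_left (Finset.sup_mono h) _

theorem bd_ph (g : ι → M) (b : M) (u : ι) {z : Finset ι →₀ K}
    (hz : z ∈ supported K K {T | u ∉ T}) :
    bd g b (ph u z) = pr g b (b ⊔ g u) z - ph u (bd g (b ⊔ g u) z) := by
  classical
  refine eq_supp ((bd g b).comp (ph u)) (pr g b (b ⊔ g u) - (ph u).comp (bd g (b ⊔ g u))) ?_ hz
  intro T hu
  simp only [Set.mem_ofPred_eq] at hu
  simp only [LinearMap.comp_apply, LinearMap.sub_apply, ph_single, pr_single, bd_single]
  have h1 : (single (insert u T) (sg u T) : Finset ι →₀ K) = sg (K := K) u T • single (insert u T) 1 := by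
    simp
  rw [h1, map_smul, bd_single, bdT, Finset.sum_insert hu, Finset.erase_insert hu, LL_insert,
    smul_add, sub_eq_add_neg]
  congr 1
  · split_ifs <;> simp [sg_insert_self, sg_sq]
  · rw [bdT, map_sum, Finset.smul_sum, ← Finset.sum_neg_distrib]
    refine Finset.sum_congr rfl fun t ht => ?_
    have hne : u ≠ t := fun h => hu (h ▸ ht)
    rw [Finset.erase_insert_of_ne hne, LL_insert]
    split_ifs
    · have h2 : (single (T.erase t) (sg t T) : Finset ι →₀ K) = sg (K := K) t T • single (T.erase t) 1 := by
        simp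
      rw [h2, map_smul, ph_single]
      simp only [smul_single, smul_eq_mul]
      rw [sg_swap u t T hu ht, single_neg]
    · simp

theorem bd_pr (g : ι → M) {b b' : M} (hb : b ≤ b') (z : Finset ι →₀ K) :
    bd g b (pr g b b' z) = pr g b b' (bd g b' z) := by
  classical
  refine eq_supp (s := Set.univ) ((bd g b).comp (pr g b b')) ((pr g b b').comp (bd g b')) ?_ (by simp)
  intro T _
  simp only [LinearMap.comp_apply, pr_single, bd_single]
  have key : pr g b b' (bdT g b' T) = (∑ t ∈ T, if LL g b (T.erase t) = LL g b' T then
      single (T.erase t) (sg t T) else 0 : Finset ι →₀ K) := by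
    rw [bdT, map_sum]
    refine Finset.sum_congr rfl fun t ht => ?_
    have m1 := LL_mono_b g hb (T.erase t)
    have m2 := LL_mono_T g b' (Finset.erase_subset t T)
    by_cases h : LL g b' (T.erase t) = LL g b' T
    · rw [if_pos h]
      have h2 : (single (T.erase t) (sg t T) : Finset ι →₀ K) = sg (K := K) t T • single (T.erase t) 1 := by
        simp
      rw [h2, map_smul, pr_single, h]
      split_ifs <;> simp
    · rw [if_neg h, if_neg, map_zero]
      intro h'
      exact h (le_antisymm m2 (h' ▸ m1))
  rw [key]
  have m1 := LL_mono_b g hb T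
  by_cases h : LL g b T = LL g b' T
  · rw [if_pos h, bd_single, bdT, h]
  · rw [if_neg h, map_zero, Finset.sum_eq_zero]
    intro t ht
    rw [if_neg]
    intro h'
    exact h (le_antisymm m1 (h' ▸ LL_mono_T g b (Finset.erase_subset t T)))

def pieceSet (g : ι → M) (deg : M → ℕ) (A : Finset ι) (b : M) (i j : ℕ) : Set (Finset ι) :=
  {T | T ⊆ A ∧ T.card = i ∧ deg (LL g b T) = j}

def Van (K : Type*) [Field K] (g : ι → M) (deg : M → ℕ) (A : Finset ι) (b : M) (c : ℕ) : Prop :=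
  ∀ i j, i + c < j → ∀ z ∈ supported K K (pieceSet g deg A b i j), bd g b z = 0 →
    ∃ w ∈ supported K K (pieceSet g deg A b (i + 1) j), bd g b w = z

variable {g : ι → M} {deg : M → ℕ} {A : Finset ι} {b : M} {c : ℕ} {u : ι}

theorem piece_notMem (hu : u ∉ A) {i j : ℕ} {z : Finset ι →₀ K}
    (hz : z ∈ supported K K (pieceSet g deg A b i j)) : z ∈ supported K K {T | u ∉ T} :=
  supported_mono (s := pieceSet g deg A b i j) (t := {T | u ∉ T}) (fun _ hT h => hu (hT.1 h)) hz

theorem bd_supp {A : Finset ι} {b : M} {z : Finset ι →₀ K}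
    (hz : z ∈ supported K K {T | T ⊆ A}) : bd g b z ∈ supported K K {T | T ⊆ A} := by
  refine map_supp _ (fun T hT => ?_) hz
  rw [bd_single, bdT]
  refine Submodule.sum_mem _ fun t _ => ?_
  split_ifs
  · exact single_mem_supported _ _ ((Finset.erase_subset t T).trans hT)
  · exact zero_mem _

theorem bd_notMem {b : M} {z : Finset ι →₀ K}
    (hz : z ∈ supported K K {T | u ∉ T}) : bd g b z ∈ supported K K {T | u ∉ T} := by
  refine map_supp _ (fun T hT => ?_) hz
  rw [bd_single, bdT]
  refine Submodule.sum_mem _ fun t _ => ?_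
  split_ifs
  · exact single_mem_supported _ _ (fun h => hT (Finset.mem_of_mem_erase h))
  · exact zero_mem _

theorem pr_notMem {b b' : M} {z : Finset ι →₀ K}
    (hz : z ∈ supported K K {T | u ∉ T}) : pr g b b' z ∈ supported K K {T | u ∉ T} := by
  refine map_supp _ (fun T hT => ?_) hz
  rw [pr_single]
  split_ifs
  · exact single_mem_supported _ _ hT
  · exact zero_mem _

theorem pr_piece {b b' : M} {i j : ℕ} {z : Finset ι →₀ K}
    (hz : z ∈ supported K K (pieceSet g deg A b' i j)) :
    pr g b b' z ∈ supported K K (pieceSet g deg A b i j) := by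
  refine map_supp _ (fun T hT => ?_) hz
  rw [pr_single]
  split_ifs with h
  · exact single_mem_supported _ _ ⟨hT.1, hT.2.1, h ▸ hT.2.2⟩
  · exact zero_mem _

theorem ph_piece (hu : u ∉ A) {i j : ℕ} {z : Finset ι →₀ K}
    (hz : z ∈ supported K K (pieceSet g deg A (b ⊔ g u) i j)) :
    ph u z ∈ supported K K (pieceSet g deg (insert u A) b (i + 1) j) := by
  refine map_supp _ (fun T hT => ?_) hz
  rw [ph_single]
  refine single_mem_supported _ _ ⟨Finset.insert_subset_insert _ hT.1, ?_, ?_⟩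
  · rw [Finset.card_insert_of_notMem (fun h => hu (hT.1 h)), hT.2.1]
  · rw [LL_insert]; exact hT.2.2

theorem piece_mono {A B : Finset ι} (h : A ⊆ B) {i j : ℕ} {z : Finset ι →₀ K}
    (hz : z ∈ supported K K (pieceSet g deg A b i j)) :
    z ∈ supported K K (pieceSet g deg B b i j) :=
  supported_mono (s := pieceSet g deg A b i j) (t := pieceSet g deg B b i j)
    (fun _ hT => ⟨hT.1.trans h, hT.2⟩) hz

theorem indep {x y : Finset ι →₀ K} (hx : x ∈ supported K K {T | u ∉ T})
    (hy : y ∈ supported K K {T | u ∉ T}) (h : x + ph u y = 0) : x = 0 ∧ y = 0 := by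
  have h1 : ps u x = 0 := by
    refine eq_supp (ps u) 0 (fun T hT => ?_) hx
    rw [ps_single, if_neg hT]; rfl
  have h2 : ps u (ph u y) = y := by
    refine eq_supp ((ps u).comp (ph u)) LinearMap.id (fun T hT => ?_) hy
    have h1 : (single (insert u T) (sg u T) : Finset ι →₀ K) = sg (K := K) u T • single (insert u T) 1 := by
      simp
    rw [LinearMap.comp_apply, ph_single, h1, map_smul, ps_single, if_pos (by simp),
      Finset.erase_insert hT, sg_insert_self]
    simp [sg_sq]
  have h3 := congrArg (ps u) h
  rw [map_add, h1, h2, zero_add, map_zero] at h3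
  subst h3
  simpa using h

theorem decomp (hu : u ∉ A) {i j : ℕ} {z : Finset ι →₀ K}
    (hz : z ∈ supported K K (pieceSet g deg (insert u A) b i j)) :
    ∃ z0 ∈ supported K K (pieceSet g deg A b i j),
      ∃ z1 ∈ supported K K {T | T ∈ pieceSet g deg A (b ⊔ g u) (i - 1) j ∧ i ≠ 0},
      z = z0 + ph u z1 := by
  rw [supported_eq_span_single] at hz
  induction hz using Submodule.span_induction with
  | mem x hx =>
    obtain ⟨T, hT, rfl⟩ := hx
    by_cases h : u ∈ T
    · refine ⟨0, zero_mem _, single (T.erase u) (sg u T), single_mem_supported _ _ ⟨⟨?_, ?_, ?_⟩, ?_⟩, ?_⟩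
      · exact Finset.subset_insert_iff.1 hT.1
      · rw [Finset.card_erase_of_mem h, hT.2.1]
      · rw [← LL_insert, Finset.insert_erase h]; exact hT.2.2
      · have := Finset.card_pos.2 ⟨u, h⟩
        have := hT.2.1
        omega
      · have h2 : (single (T.erase u) (sg u T) : Finset ι →₀ K) = sg (K := K) u T • single (T.erase u) 1 := by
          simp
        rw [h2, map_smul, ph_single, Finset.insert_erase h]
        simp only [smul_single, smul_eq_mul]
        rw [zero_add, ← sg_insert_self u (T.erase u), Finset.insert_erase h, sg_sq]
    · refine ⟨single T 1, single_mem_supported _ _ ⟨?_, hT.2⟩, 0, zero_mem _, by simp⟩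
      exact (Finset.subset_insert_iff_of_notMem h).1 hT.1
  | zero => exact ⟨0, zero_mem _, 0, zero_mem _, by simp⟩
  | add x y _ _ hx hy =>
    obtain ⟨x0, hx0, x1, hx1, rfl⟩ := hx
    obtain ⟨y0, hy0, y1, hy1, rfl⟩ := hy
    exact ⟨_, add_mem hx0 hy0, _, add_mem hx1 hy1, by rw [map_add]; abel⟩
  | smul a x _ hx =>
    obtain ⟨x0, hx0, x1, hx1, rfl⟩ := hx
    exact ⟨_, Submodule.smul_mem _ a hx0, _, Submodule.smul_mem _ a hx1, by rw [map_smul, smul_add]⟩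

theorem Van.add (hu : u ∉ A) (h0 : Van K g deg A b c) (h1 : Van K g deg A (b ⊔ g u) (c + 1)) :
    Van K g deg (insert u A) b c := by
  intro i j hij z hz hbd
  obtain ⟨z0, hz0, z1, hz1, rfl⟩ := decomp hu hz
  have hz1' : z1 ∈ supported K K (pieceSet g deg A (b ⊔ g u) (i - 1) j) :=
    supported_mono (fun T hT => hT.1) hz1
  have n0 := piece_notMem hu hz0
  have n1 := piece_notMem hu hz1'
  rw [map_add, bd_ph g b u n1] at hbd
  have := indep (x := bd g b z0 + pr g b (b ⊔ g u) z1) (y := - bd g (b ⊔ g u) z1)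
    (add_mem (bd_notMem n0) (pr_notMem n1)) (neg_mem (bd_notMem n1))
    (by rw [← hbd, map_neg]; abel)
  obtain ⟨e0, e1⟩ := this
  rw [neg_eq_zero] at e1
  obtain ⟨w1, hw1, hw1'⟩ : ∃ w ∈ supported K K (pieceSet g deg A (b ⊔ g u) i j),
      bd g (b ⊔ g u) w = z1 := by
    by_cases hi : i = 0
    · refine ⟨0, zero_mem _, ?_⟩
      have : z1 = 0 := by
        have : {T | T ∈ pieceSet g deg A (b ⊔ g u) (i - 1) j ∧ i ≠ 0} = ∅ := by
          ext T; simp [hi]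
        rw [this] at hz1
        simpa using hz1
      rw [this, map_zero]
    · obtain ⟨w, hw, hw'⟩ := h1 (i - 1) j (by omega) z1 hz1' e1
      rw [Nat.sub_add_cancel (by omega)] at hw
      exact ⟨w, hw, hw'⟩
  have nw := piece_notMem hu hw1
  obtain ⟨w0, hw0, hw0'⟩ := h0 i j hij (z0 + pr g b (b ⊔ g u) w1) (add_mem hz0 (pr_piece hw1))
    (by rw [map_add, bd_pr g le_sup_left, hw1', e0])
  refine ⟨w0 - ph u w1, sub_mem (piece_mono (Finset.subset_insert _ _) hw0) (ph_piece hu hw1), ?_⟩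
  rw [map_sub, hw0', bd_ph g b u nw, hw1']
  abel

theorem Van.rem (hu : u ∉ A) (h0 : Van K g deg (insert u A) b c)
    (h1 : Van K g deg A (b ⊔ g u) c) : Van K g deg A b c := by
  intro i j hij z hz hbd
  obtain ⟨w, hw, rfl⟩ := h0 i j hij z (piece_mono (Finset.subset_insert _ _) hz) hbd
  obtain ⟨w0, hw0, w1, hw1, rfl⟩ := decomp hu hw
  have hw1' : w1 ∈ supported K K (pieceSet g deg A (b ⊔ g u) i j) :=
    supported_mono (fun T hT => hT.1) hw1
  have n0 := piece_notMem hu hw0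
  have n1 := piece_notMem hu hw1'
  have nz := piece_notMem hu hz
  rw [map_add, bd_ph g b u n1] at nz ⊢
  have := indep (u := u) (x := bd g b w0 + pr g b (b ⊔ g u) w1 -
      (bd g b w0 + (pr g b (b ⊔ g u) w1 - ph u (bd g (b ⊔ g u) w1)))) (y := - bd g (b ⊔ g u) w1)
    (sub_mem (add_mem (bd_notMem n0) (pr_notMem n1)) nz) (neg_mem (bd_notMem n1))
    (by rw [map_neg]; abel)
  have e1 := this.2
  rw [neg_eq_zero] at e1
  obtain ⟨v, hv, hv'⟩ := h1 i j hij w1 hw1' e1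
  refine ⟨w0 + pr g b (b ⊔ g u) v, add_mem hw0 (pr_piece hv), ?_⟩
  rw [map_add, bd_pr g le_sup_left, hv', e1, map_zero, sub_zero]

theorem Van.unit (hu : u ∈ A) (h : g u ≤ b) : Van K g deg A b c := by
  intro i j _ z hz hbd
  have hA : insert u (A.erase u) = A := Finset.insert_erase hu
  have hu' : u ∉ A.erase u := by simp
  have hb : b ⊔ g u = b := sup_eq_left.2 h
  rw [← hA] at hz
  obtain ⟨z0, hz0, z1, hz1, rfl⟩ := decomp hu' hz
  have hz1' : z1 ∈ supported K K (pieceSet g deg (A.erase u) (b ⊔ g u) (i - 1) j) :=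
    supported_mono (fun T hT => hT.1) hz1
  have n0 := piece_notMem hu' hz0
  have n1 := piece_notMem hu' hz1'
  have prid : ∀ x : Finset ι →₀ K, pr g b b x = x := by
    intro x
    refine eq_supp (s := Set.univ) (pr g b b) LinearMap.id (fun T _ => ?_) (by simp)
    rw [pr_single]; simp
  rw [map_add, bd_ph g b u n1, hb, prid] at hbd
  have := indep (x := bd g b z0 + z1) (y := - bd g b z1)
    (add_mem (bd_notMem n0) n1) (neg_mem (bd_notMem n1))
    (by rw [← hbd, map_neg]; abel)
  have e0 : bd g b z0 = - z1 := eq_neg_of_add_eq_zero_left this.1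
  refine ⟨ph u z0, ?_, ?_⟩
  · rw [← hA]; exact ph_piece hu' (by rw [hb]; exact hz0)
  · rw [bd_ph g b u n0, hb, prid, e0, map_neg]; abel

theorem Van.empty (h : deg b ≤ c) : Van K g deg ∅ b c := by
  intro i j hij z hz _
  refine ⟨0, zero_mem _, ?_⟩
  have : pieceSet g deg ∅ b i j = ∅ := by
    ext T
    simp only [pieceSet, Set.mem_ofPred_eq, Set.mem_empty_iff_false, iff_false]
    rintro ⟨h1, h2, h3⟩
    rw [Finset.subset_empty] at h1
    subst h1
    simp [LL] at h2 h3
    omega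
  rw [this] at hz
  rw [map_zero]
  symm
  simpa using hz

theorem Van.union {B : Finset ι} (hB : ∀ u ∈ B, ∃ a ∈ A, g a ≤ b ⊔ g u) :
    Van K g deg A b c ↔ Van K g deg (A ∪ B) b c := by
  induction B using Finset.induction_on with
  | empty => simp
  | insert u B hu ih =>
    rw [ih (fun v hv => hB v (Finset.mem_insert_of_mem hv)), Finset.union_insert]
    by_cases h : u ∈ A ∪ B
    · rw [Finset.insert_eq_self.2 h]
    obtain ⟨a, ha, hau⟩ := hB u (Finset.mem_insert_self _ _)
    have ha' : a ∈ A ∪ B := Finset.mem_union_left _ ha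
    exact ⟨fun h0 => h0.add h (Van.unit ha' hau), fun h0 => h0.rem h (Van.unit ha' hau)⟩

theorem Van.congr {B : Finset ι} (hB : ∀ u ∈ B, ∃ a ∈ A, g a ≤ b ⊔ g u)
    (hA : ∀ u ∈ A, ∃ a ∈ B, g a ≤ b ⊔ g u) (h : Van K g deg A b c) : Van K g deg B b c := by
  rw [Van.union hA, Finset.union_comm]
  exact (Van.union hB).1 h

/-- transport along an order embedding -/
theorem Van.transport {κ : Type*} [LinearOrder κ] {g' : κ → M} (f : ι ↪o κ)
    (hf : ∀ x, g' (f x) = g x) (h : Van K g' deg (A.map f.toEmbedding) b c) :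
    Van K g deg A b c := by
  intro i j hij z hz hbd
  let m : Finset ι → Finset κ := Finset.map f.toEmbedding
  have minj : Function.Injective m := Finset.map_injective _
  let F : (Finset ι →₀ K) →ₗ[K] (Finset κ →₀ K) := Finsupp.lmapDomain K K m
  have Finj : Function.Injective F := Finsupp.mapDomain_injective minj
  have hLL : ∀ T, LL g' b (m T) = LL g b T := by
    intro T
    simp only [LL, m, Finset.sup_map]
    congr 2
    funext x; exact hf x
  have hF : ∀ x, bd g' b (F x) = F (bd g b x) := by
    intro x
    refine eq_supp (s := Set.univ) ((bd g' b).comp F) (F.comp (bd g b)) (fun T _ => ?_) (by simp)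
    simp only [LinearMap.comp_apply, bd_single, F, lmapDomain_apply, mapDomain_single]
    rw [bdT, bdT, mapDomain_finsetSum]
    rw [Finset.sum_map]
    refine Finset.sum_congr rfl fun t _ => ?_
    have e1 : (m T).erase (f.toEmbedding t) = m (T.erase t) := by
      simp only [m]
      rw [Finset.map_erase]
    rw [e1, hLL, hLL]
    split_ifs
    · rw [mapDomain_single]
      congr 1
      simp only [sg, m, Finset.filter_map, Finset.card_map]
      congr 2
      ext s; simp
    · simp
  have hmem : ∀ i, ∀ T : Finset κ, T ∈ pieceSet g' deg (A.map f.toEmbedding) b i j ↔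
      ∃ T0 ∈ pieceSet g deg A b i j, m T0 = T := by
    intro i T
    constructor
    · rintro ⟨h1, h2, h3⟩
      obtain ⟨T0, h0, rfl⟩ := Finset.subset_map_iff.1 h1
      refine ⟨T0, ⟨h0, by simpa using h2, ?_⟩, rfl⟩
      rw [← hLL]; exact h3
    · rintro ⟨T0, ⟨h1, h2, h3⟩, rfl⟩
      exact ⟨Finset.map_subset_map.2 h1, by simpa [m] using h2, by rw [hLL]; exact h3⟩
  obtain ⟨w, hw, hw'⟩ := h i j hij (F z)
    (map_supp F (fun T hT => by
      simp only [F, lmapDomain_apply, mapDomain_single]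
      exact single_mem_supported _ _ ((hmem i _).2 ⟨T, hT, rfl⟩)) hz)
    (by rw [hF, hbd, map_zero])
  obtain ⟨w0, hw0, rfl⟩ : ∃ w0 ∈ supported K K (pieceSet g deg A b (i + 1) j), F w0 = w := by
    rw [supported_eq_span_single] at hw
    clear hw'
    induction hw using Submodule.span_induction with
    | mem x hx =>
      obtain ⟨T, hT, rfl⟩ := hx
      obtain ⟨T0, h0, rfl⟩ := (hmem _ _).1 hT
      exact ⟨single T0 1, single_mem_supported _ _ h0, by simp [F]⟩
    | zero => exact ⟨0, zero_mem _, by simp⟩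
    | add x y _ _ hx hy =>
      obtain ⟨x0, hx0, rfl⟩ := hx
      obtain ⟨y0, hy0, rfl⟩ := hy
      exact ⟨_, add_mem hx0 hy0, by rw [map_add]⟩
    | smul a x _ hx =>
      obtain ⟨x0, hx0, rfl⟩ := hx
      exact ⟨_, Submodule.smul_mem _ a hx0, by rw [map_smul]⟩
  refine ⟨w0, hw0, Finj ?_⟩
  rw [← hF, hw']

end Chains
end TV
namespace TV
open Finsupp
section Sets
variable {V K : Type*} [Fintype V] [DecidableEq V] [Field K]

noncomputable def mon (W : Finset V) : V →₀ ℕ :=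
  Finsupp.onFinset W (fun v => if v ∈ W then 1 else 0) (by intro v; simp)

theorem mon_apply (W : Finset V) (v : V) : mon W v = if v ∈ W then 1 else 0 := rfl

theorem mon_le {W W' : Finset V} : mon W ≤ mon W' ↔ W ⊆ W' := by
  constructor
  · intro h v hv
    have := h v
    rw [mon_apply, mon_apply, if_pos hv] at this
    by_contra h'
    simp [h'] at this
  · intro h v
    rw [mon_apply, mon_apply]
    split_ifs with h1 h2
    · exact le_rfl
    · exact absurd (h h1) h2
    · simp
    · simp

theorem mon_inj {W W' : Finset V} (h : mon W = mon W') : W = W' :=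
  Finset.Subset.antisymm (mon_le.1 h.le) (mon_le.1 h.ge)

theorem mon_sup (W W' : Finset V) : mon W ⊔ mon W' = mon (W ∪ W') := by
  ext v
  rw [Finsupp.sup_apply, mon_apply, mon_apply, mon_apply]
  by_cases h1 : v ∈ W <;> by_cases h2 : v ∈ W' <;> simp [h1, h2]

theorem mon_deg (W : Finset V) : monomialDegree (mon W) = W.card := by
  unfold monomialDegree
  rw [Finsupp.sum_of_support_subset (s := W)]
  · simp [mon_apply]
  · exact Finsupp.support_onFinset_subset
  · simp

def RR (K : Type*) [Field K] (S : Set (Finset V)) (b : Finset V) (c : ℕ) : Prop :=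
  ∀ (g : ℕ → V →₀ ℕ), Function.Surjective g → ∀ A : Finset ℕ,
    (∀ a ∈ A, ∃ s ∈ S, g a = mon s) → (∀ s ∈ S, ∃ a ∈ A, g a = mon s) →
    Van K g monomialDegree A (mon b) c

theorem lift (S : Set (Finset V)) (g : ℕ → V →₀ ℕ) (hg : Function.Surjective g) :
    ∃ A : Finset ℕ, (∀ a ∈ A, ∃ s ∈ S, g a = mon s) ∧ (∀ s ∈ S, ∃ a ∈ A, g a = mon s) := by
  classical
  refine ⟨(Set.toFinite S).toFinset.image (fun s => Function.surjInv hg (mon s)), ?_, ?_⟩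
  · intro a ha
    simp only [Finset.mem_image, Set.Finite.mem_toFinset] at ha
    obtain ⟨s, hs, rfl⟩ := ha
    exact ⟨s, hs, Function.surjInv_eq hg _⟩
  · intro s hs
    exact ⟨_, Finset.mem_image_of_mem _ ((Set.Finite.mem_toFinset _).2 hs),
      Function.surjInv_eq hg _⟩

variable {S S' : Set (Finset V)} {b u : Finset V} {c : ℕ}

theorem RR.congr (h : RR K S b c) (h1 : ∀ s ∈ S', ∃ t ∈ S, t ⊆ b ∪ s)
    (h2 : ∀ s ∈ S, ∃ t ∈ S', t ⊆ b ∪ s) : RR K S' b c := by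
  intro g hg A' hA1 hA2
  obtain ⟨A, hB1, hB2⟩ := lift S g hg
  refine Van.congr ?_ ?_ (h g hg A hB1 hB2)
  · intro a ha
    obtain ⟨s, hs, e⟩ := hA1 a ha
    obtain ⟨t, ht, hts⟩ := h1 s hs
    obtain ⟨a', ha', e'⟩ := hB2 t ht
    exact ⟨a', ha', by rw [e, e', mon_sup, mon_le]; exact hts⟩
  · intro a ha
    obtain ⟨s, hs, e⟩ := hB1 a ha
    obtain ⟨t, ht, hts⟩ := h2 s hs
    obtain ⟨a', ha', e'⟩ := hA2 t ht
    exact ⟨a', ha', by rw [e, e', mon_sup, mon_le]; exact hts⟩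

theorem RR.add (h0 : RR K S b c) (h1 : RR K S (b ∪ u) (c + 1)) : RR K (insert u S) b c := by
  by_cases hu : u ∈ S
  · rw [Set.insert_eq_of_mem hu]; exact h0
  intro g hg A hA1 hA2
  obtain ⟨B, hB1, hB2⟩ := lift S g hg
  obtain ⟨n, hn⟩ := hg (mon u)
  have hnB : n ∉ B := by
    intro h
    obtain ⟨s, hs, e⟩ := hB1 n h
    exact hu (by rw [mon_inj (hn.symm.trans e)]; exact hs)
  have key : Van K g monomialDegree (insert n B) (mon b) c := by
    refine Van.add hnB (h0 g hg B hB1 hB2) ?_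
    rw [hn, mon_sup]
    exact h1 g hg B hB1 hB2
  refine Van.congr ?_ ?_ key
  · intro a ha
    obtain ⟨s, hs, e⟩ := hA1 a ha
    rcases hs with rfl | hs
    · exact ⟨n, by simp, by rw [hn, e]; exact le_sup_right⟩
    · obtain ⟨a', ha', e'⟩ := hB2 s hs
      exact ⟨a', by simp [ha'], by rw [e, e']; exact le_sup_right⟩
  · intro a ha
    rcases Finset.mem_insert.1 ha with rfl | ha
    · obtain ⟨a', ha', e'⟩ := hA2 u (by simp)
      exact ⟨a', ha', by rw [e', hn]; exact le_sup_right⟩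
    · obtain ⟨s, hs, e⟩ := hB1 a ha
      obtain ⟨a', ha', e'⟩ := hA2 s (by simp [hs])
      exact ⟨a', ha', by rw [e, e']; exact le_sup_right⟩

theorem RR.rem (h0 : RR K (insert u S) b c) (h1 : RR K S (b ∪ u) c) : RR K S b c := by
  by_cases hu : u ∈ S
  · rwa [Set.insert_eq_of_mem hu] at h0
  intro g hg A hA1 hA2
  obtain ⟨n, hn⟩ := hg (mon u)
  have hnA : n ∉ A := by
    intro h
    obtain ⟨s, hs, e⟩ := hA1 n h
    exact hu (by rw [mon_inj (hn.symm.trans e)]; exact hs)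
  refine Van.rem hnA (h0 g hg _ ?_ ?_) ?_
  · intro a ha
    rcases Finset.mem_insert.1 ha with rfl | ha
    · exact ⟨u, by simp, hn⟩
    · obtain ⟨s, hs, e⟩ := hA1 a ha
      exact ⟨s, by simp [hs], e⟩
  · rintro s (rfl | hs)
    · exact ⟨n, by simp, hn⟩
    · obtain ⟨a, ha, e⟩ := hA2 s hs
      exact ⟨a, by simp [ha], e⟩
  · rw [hn, mon_sup]; exact h1 g hg A hA1 hA2

theorem RR.empty (h : b.card ≤ c) : RR K (∅ : Set (Finset V)) b c := by
  intro g hg A hA1 _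
  have : A = ∅ := by
    ext a; simp only [Finset.notMem_empty, iff_false]
    intro ha
    obtain ⟨s, hs, _⟩ := hA1 a ha
    exact hs
  rw [this]
  exact Van.empty (by rw [mon_deg]; exact h)

def singles (X : Finset V) : Set (Finset V) := {s | ∃ v ∈ X, s = {v}}
def edges (H : V → V → Prop) (W : Finset V) : Set (Finset V) :=
  {s | ∃ c ∈ W, ∃ d ∈ W, H c d ∧ s = {c, d}}

theorem RR.vars (X : Finset V) : ∀ (b : Finset V) (c : ℕ), b.card ≤ c → RR K (singles X) b c := by
  induction X using Finset.induction_on with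
  | empty =>
    intro b c h
    have : singles (∅ : Finset V) = ∅ := by ext s; simp [singles]
    rw [this]; exact RR.empty h
  | insert v X hv ih =>
    intro b c h
    have : singles (insert v X) = insert {v} (singles X) := by ext s; simp [singles]
    rw [this]
    refine RR.add (ih b c h) (ih _ _ ?_)
    exact (Finset.card_union_le _ _).trans (by simp; exact h)

theorem RR.lin (H : V → V → Prop) (hs : ∀ x y, H x y → H y x) (b : Finset V) (c : ℕ)
    (hc : b.card + 1 ≤ c) (W : Finset V) : ∀ (X : Finset V),
    (∀ W' ⊆ W, (∃ p ∈ W', ∃ q ∈ W', H p q) →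
      ∃ k ∈ W', ∀ p ∈ W', ∀ q ∈ W', ¬ H k p → ¬ H k q → ¬ H p q) →
    RR K (singles X ∪ edges H W) b c := by
  classical
  induction W using Finset.strongInduction with
  | H W ih =>
  intro X hW
  by_cases hE : ∃ p ∈ W, ∃ q ∈ W, H p q
  · obtain ⟨k, hk, hkk⟩ := hW W subset_rfl hE
    refine RR.rem (u := {k}) ?_ ?_
    · refine RR.congr (ih (W.erase k) (Finset.erase_ssubset hk) (insert k X)
        (fun W' h => hW W' (h.trans (Finset.erase_subset _ _)))) ?_ ?_
      · rintro s (rfl | ⟨v, hv, rfl⟩ | ⟨p, hp, q, hq, hpq, rfl⟩)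
        · exact ⟨{k}, Or.inl ⟨k, by simp, rfl⟩, Finset.subset_union_right⟩
        · exact ⟨{v}, Or.inl ⟨v, by simp [hv], rfl⟩, Finset.subset_union_right⟩
        · by_cases h1 : p = k
          · exact ⟨{k}, Or.inl ⟨k, by simp, rfl⟩, by intro x; simp +contextual [h1]⟩
          by_cases h2 : q = k
          · exact ⟨{k}, Or.inl ⟨k, by simp, rfl⟩, by intro x; simp +contextual [h2]⟩
          exact ⟨{p, q}, Or.inr ⟨p, by simp [h1, hp], q, by simp [h2, hq], hpq, rfl⟩,
            Finset.subset_union_right⟩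
      · rintro s (⟨v, hv, rfl⟩ | ⟨p, hp, q, hq, hpq, rfl⟩)
        · rcases Finset.mem_insert.1 hv with rfl | hv
          · exact ⟨{v}, Or.inl rfl, Finset.subset_union_right⟩
          · exact ⟨{v}, Or.inr (Or.inl ⟨v, hv, rfl⟩), Finset.subset_union_right⟩
        · exact ⟨{p, q}, Or.inr (Or.inr ⟨p, Finset.mem_of_mem_erase hp, q,
            Finset.mem_of_mem_erase hq, hpq, rfl⟩), Finset.subset_union_right⟩
    · refine RR.congr (RR.vars (X ∪ W.filter (fun v => H k v)) (b ∪ {k}) c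
        ((Finset.card_union_le _ _).trans (by simpa using hc))) ?_ ?_
      · rintro s (⟨v, hv, rfl⟩ | ⟨p, hp, q, hq, hpq, rfl⟩)
        · exact ⟨{v}, ⟨v, by simp [hv], rfl⟩, Finset.subset_union_right⟩
        · by_cases h1 : H k p
          · exact ⟨{p}, ⟨p, by simp [hp, h1], rfl⟩, by intro x; simp +contextual⟩
          by_cases h2 : H k q
          · exact ⟨{q}, ⟨q, by simp [hq, h2], rfl⟩, by intro x; simp +contextual⟩
          exact absurd hpq (hkk p hp q hq h1 h2)
      · rintro s ⟨v, hv, rfl⟩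
        rcases Finset.mem_union.1 hv with hv | hv
        · exact ⟨{v}, Or.inl ⟨v, hv, rfl⟩, Finset.subset_union_right⟩
        · rw [Finset.mem_filter] at hv
          refine ⟨{k, v}, Or.inr ⟨k, hk, v, hv.1, hv.2, rfl⟩, ?_⟩
          intro x; simp only [Finset.mem_insert, Finset.mem_singleton, Finset.mem_union]; tauto
  · have : edges H W = ∅ := by
      ext s
      simp only [edges, Set.mem_ofPred_eq, Set.mem_empty_iff_false, iff_false]
      rintro ⟨p, hp, q, hq, hpq, _⟩
      exact hE ⟨p, hp, q, hq, hpq⟩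
    rw [this, Set.union_empty]
    exact RR.vars X b c (by omega)

/-- the graph of the colon ideal by the edge `ab`. -/
def HH (G : SimpleGraph V) (a b c d : V) : Prop :=
  c ≠ d ∧ (G.Adj c d ∨ (G.Adj a c ∧ G.Adj b d) ∨ (G.Adj a d ∧ G.Adj b c))

theorem HH_symm (G : SimpleGraph V) (a b c d : V) (h : HH G a b c d) : HH G a b d c := by
  obtain ⟨h1, h2⟩ := h
  refine ⟨h1.symm, ?_⟩
  rcases h2 with h | h | h
  · exact Or.inl h.symm
  · exact Or.inr (Or.inr h)
  · exact Or.inr (Or.inl h)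

theorem HH_swap (G : SimpleGraph V) (a b c d : V) : HH G a b c d ↔ HH G b a c d := by
  unfold HH; tauto

variable {G : SimpleGraph V}

theorem keyA (hgap : G.GapFree) (hcr : G.CricketFree) {a b : V} (hab : G.Adj a b)
    (W : Finset V) (ha : a ∉ W) (hb : b ∉ W) (hA : ∃ k ∈ W, G.Adj a k ∧ ¬ G.Adj b k) :
    ∃ k ∈ W, ∀ p ∈ W, ∀ q ∈ W, ¬ HH G a b k p → ¬ HH G a b k q → ¬ HH G a b p q := by
  classical
  let D := W.filter (fun d => ¬ G.Adj a d ∧ ¬ G.Adj b d)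
  let N : V → Finset V := fun k => D.filter (fun d => G.Adj k d)
  have hDD : ∀ x ∈ D, ∀ y ∈ D, ¬ G.Adj x y := by
    intro x hx y hy hxy
    simp only [D, Finset.mem_filter] at hx hy
    have n1 : a ≠ x := fun h => ha (h ▸ hx.1)
    have n2 : a ≠ y := fun h => ha (h ▸ hy.1)
    have n3 : b ≠ x := fun h => hb (h ▸ hx.1)
    have n4 : b ≠ y := fun h => hb (h ▸ hy.1)
    have := hgap a b x y hab hxy n1 n2 n3 n4
    tauto
  obtain ⟨k, hk, hmax⟩ := Finset.exists_max_image
    (W.filter (fun k => G.Adj a k ∧ ¬ G.Adj b k)) (fun k => (N k).card)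
    (by obtain ⟨k, hk, h⟩ := hA; exact ⟨k, by simp [hk, h]⟩)
  rw [Finset.mem_filter] at hk
  obtain ⟨hkW, hak, hbk⟩ := hk
  refine ⟨k, hkW, ?_⟩
  intro p hp q hq hkp hkq hpq
  have hpk : k ≠ p := fun h => hkq (h ▸ hpq)
  have hqk : k ≠ q := fun h => hkp (h ▸ HH_symm G a b _ _ hpq)
  unfold HH at hkp hkq hpq
  have hbp : ¬ G.Adj b p := fun h => hkp ⟨hpk, Or.inr (Or.inl ⟨hak, h⟩)⟩
  have hbq : ¬ G.Adj b q := fun h => hkq ⟨hqk, Or.inr (Or.inl ⟨hak, h⟩)⟩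
  have hkp' : ¬ G.Adj k p := fun h => hkp ⟨hpk, Or.inl h⟩
  have hkq' : ¬ G.Adj k q := fun h => hkq ⟨hqk, Or.inl h⟩
  have hpq' : G.Adj p q := by tauto
  -- mixed case
  have mixed : ∀ x y, x ∈ W → y ∈ W → G.Adj x y → k ≠ x → k ≠ y → ¬ G.Adj k x → ¬ G.Adj k y →
      ¬ G.Adj b x → ¬ G.Adj b y → G.Adj a x → ¬ G.Adj a y → False := by
    intro x y hx hy hxy nkx nky hkx hky hbx hby hax hay
    have hyD : y ∈ D := by simp [D, hy, hay, hby]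
    have hle := hmax x (by simp [hx, hax, hbx])
    have : ∃ d ∈ N k, d ∉ N x := by
      by_contra hcon
      push Not at hcon
      have hsub : N k ⊆ N x := hcon
      have heq := Finset.eq_of_subset_of_card_le hsub hle
      have : y ∈ N k := by rw [heq]; simp [N, hyD, hxy]
      simp only [N, Finset.mem_filter] at this
      exact hky this.2
    obtain ⟨d, hd, hdx⟩ := this
    simp only [N, Finset.mem_filter] at hd hdx
    have hdx' : ¬ G.Adj x d := fun h => hdx ⟨hd.1, h⟩
    have hdD := hd.1
    simp only [D, Finset.mem_filter] at hdD
    have n1 : x ≠ d := fun h => hdD.2.1 (h ▸ hax)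
    have n2 : y ≠ d := fun h => hky (h ▸ hd.2)
    have := hgap x y k d hxy hd.2 nkx.symm n1 nky.symm n2
    rcases this with h | h | h | h
    · exact hkx h.symm
    · exact hdx' h
    · exact hky h.symm
    · exact hDD y hyD d hd.1 h
  by_cases hap : G.Adj a p <;> by_cases haq : G.Adj a q
  · refine hcr ⟨b, k, a, p, q, ?_, hab.ne.symm, ?_, ?_, hak.ne.symm, hpk, hqk, hap.ne, haq.ne,
      hpq'.ne, hab.symm, hak.symm, hap, haq, hpq', hbk, hbp, hbq, hkp', hkq'⟩
    · exact fun h => hb (h ▸ hkW)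
    · exact fun h => hb (h ▸ hp)
    · exact fun h => hb (h ▸ hq)
  · exact mixed p q hp hq hpq' hpk hqk hkp' hkq' hbp hbq hap haq
  · exact mixed q p hq hp hpq'.symm hqk hpk hkq' hkp' hbq hbp haq hap
  · exact hDD p (by simp [D, hp, hap, hbp]) q (by simp [D, hq, haq, hbq]) hpq'

theorem key (hgap : G.GapFree) (hcr : G.CricketFree) {a b : V} (hab : G.Adj a b)
    (W : Finset V) (ha : a ∉ W) (hb : b ∉ W) (hE : ∃ p ∈ W, ∃ q ∈ W, HH G a b p q) :
    ∃ k ∈ W, ∀ p ∈ W, ∀ q ∈ W, ¬ HH G a b k p → ¬ HH G a b k q → ¬ HH G a b p q := by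
  by_cases hA : ∃ k ∈ W, G.Adj a k ∧ ¬ G.Adj b k
  · exact keyA hgap hcr hab W ha hb hA
  by_cases hB : ∃ k ∈ W, G.Adj b k ∧ ¬ G.Adj a k
  · obtain ⟨k, hk, h⟩ := keyA hgap hcr hab.symm W hb ha hB
    refine ⟨k, hk, fun p hp q hq h1 h2 h3 => h p hp q hq ?_ ?_ ?_⟩
    · rwa [HH_swap]
    · rwa [HH_swap]
    · rwa [HH_swap]
  have hDD : ∀ x ∈ W, ∀ y ∈ W, ¬ G.Adj a x → ¬ G.Adj b x → ¬ G.Adj a y → ¬ G.Adj b y →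
      ¬ G.Adj x y := by
    intro x hx y hy _ _ _ _ hxy
    have n1 : a ≠ x := fun h => ha (h ▸ hx)
    have n2 : a ≠ y := fun h => ha (h ▸ hy)
    have n3 : b ≠ x := fun h => hb (h ▸ hx)
    have n4 : b ≠ y := fun h => hb (h ▸ hy)
    have := hgap a b x y hab hxy n1 n2 n3 n4
    tauto
  by_cases hC : ∃ k ∈ W, G.Adj a k ∧ G.Adj b k
  · obtain ⟨k, hk, hak, hbk⟩ := hC
    refine ⟨k, hk, fun p hp q hq h1 h2 h3 => ?_⟩
    have hpk : k ≠ p := fun h => h2 (h ▸ h3)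
    have hqk : k ≠ q := fun h => h1 (h ▸ HH_symm G a b _ _ h3)
    unfold HH at h1 h2 h3
    have := hDD p hp q hq (by tauto) (by tauto) (by tauto) (by tauto)
    tauto
  · exfalso
    obtain ⟨p, hp, q, hq, hpq⟩ := hE
    have e1 : ∀ x ∈ W, ¬ G.Adj a x ∧ ¬ G.Adj b x := by
      intro x hx
      by_cases h1 : G.Adj a x <;> by_cases h2 : G.Adj b x
      · exact absurd ⟨x, hx, h1, h2⟩ hC
      · exact absurd ⟨x, hx, h1, h2⟩ hA
      · exact absurd ⟨x, hx, h2, h1⟩ hB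
      · exact ⟨h1, h2⟩
    have := hDD p hp q hq (e1 p hp).1 (e1 p hp).2 (e1 q hq).1 (e1 q hq).2
    have := e1 p hp
    have := e1 q hq
    unfold HH at hpq
    tauto

/-- reg of the edge ideal -/
theorem RR.edgeIdeal (hgap : G.GapFree) (hcr : G.CricketFree) (W : Finset V) : ∀ X : Finset V,
    RR K (singles X ∪ edges G.Adj W) ∅ 3 := by
  classical
  induction W using Finset.strongInduction with
  | H W ih =>
  intro X
  by_cases hE : ∃ p ∈ W, ∃ q ∈ W, G.Adj p q
  · obtain ⟨k, hk, y, hy, hky⟩ := hE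
    refine RR.rem (u := {k}) ?_ ?_
    · refine RR.congr (ih (W.erase k) (Finset.erase_ssubset hk) (insert k X)) ?_ ?_
      · rintro s (rfl | ⟨v, hv, rfl⟩ | ⟨p, hp, q, hq, hpq, rfl⟩)
        · exact ⟨{k}, Or.inl ⟨k, by simp, rfl⟩, Finset.subset_union_right⟩
        · exact ⟨{v}, Or.inl ⟨v, by simp [hv], rfl⟩, Finset.subset_union_right⟩
        · by_cases h1 : p = k
          · exact ⟨{k}, Or.inl ⟨k, by simp, rfl⟩, by intro x; simp +contextual [h1]⟩
          by_cases h2 : q = k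
          · exact ⟨{k}, Or.inl ⟨k, by simp, rfl⟩, by intro x; simp +contextual [h2]⟩
          exact ⟨{p, q}, Or.inr ⟨p, by simp [h1, hp], q, by simp [h2, hq], hpq, rfl⟩,
            Finset.subset_union_right⟩
      · rintro s (⟨v, hv, rfl⟩ | ⟨p, hp, q, hq, hpq, rfl⟩)
        · rcases Finset.mem_insert.1 hv with rfl | hv
          · exact ⟨{v}, Or.inl rfl, Finset.subset_union_right⟩
          · exact ⟨{v}, Or.inr (Or.inl ⟨v, hv, rfl⟩), Finset.subset_union_right⟩
        · exact ⟨{p, q}, Or.inr (Or.inr ⟨p, Finset.mem_of_mem_erase hp, q,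
            Finset.mem_of_mem_erase hq, hpq, rfl⟩), Finset.subset_union_right⟩
    · have hlin : RR K (singles (X ∪ W.filter (fun v => G.Adj k v)) ∪
          edges G.Adj (W.filter (fun v => v ≠ k ∧ ¬ G.Adj k v))) (∅ ∪ {k}) 3 := by
        refine RR.lin G.Adj (fun _ _ h => h.symm) _ _ (by simp) _ _ ?_
        rintro W' hW' ⟨p, hp, q, hq, hpq⟩
        have hn : ∀ x ∈ W', x ≠ k ∧ ¬ G.Adj k x := fun x hx => (Finset.mem_filter.1 (hW' hx)).2
        have hHH : ∀ x ∈ W', ∀ z ∈ W', (HH G k y x z ↔ G.Adj x z) := by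
          intro x hx z hz
          have h1 := (hn x hx).2
          have h2 := (hn z hz).2
          unfold HH
          constructor
          · tauto
          · intro h; exact ⟨h.ne, Or.inl h⟩
        obtain ⟨l, hl, hl'⟩ := key hgap hcr hky W' (fun h => (hn k h).1 rfl)
          (fun h => (hn y h).2 hky) ⟨p, hp, q, hq, (hHH p hp q hq).2 hpq⟩
        refine ⟨l, hl, fun p hp q hq h1 h2 h3 => hl' p hp q hq ?_ ?_ ?_⟩
        · rwa [hHH l hl p hp]
        · rwa [hHH l hl q hq]
        · rwa [hHH p hp q hq]
      refine RR.congr hlin ?_ ?_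
      · rintro s (⟨v, hv, rfl⟩ | ⟨p, hp, q, hq, hpq, rfl⟩)
        · exact ⟨{v}, Or.inl ⟨v, by simp [hv], rfl⟩, Finset.subset_union_right⟩
        · by_cases h1 : G.Adj k p
          · exact ⟨{p}, Or.inl ⟨p, by simp [hp, h1], rfl⟩, by intro x; simp +contextual⟩
          by_cases h2 : G.Adj k q
          · exact ⟨{q}, Or.inl ⟨q, by simp [hq, h2], rfl⟩, by intro x; simp +contextual⟩
          have h3 : p ≠ k := fun h => h2 (h ▸ hpq)
          have h4 : q ≠ k := fun h => h1 (h ▸ hpq.symm)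
          exact ⟨{p, q}, Or.inr ⟨p, by simp [hp, h1, h3], q, by simp [hq, h2, h4], hpq, rfl⟩,
            Finset.subset_union_right⟩
      · rintro s (⟨v, hv, rfl⟩ | ⟨p, hp, q, hq, hpq, rfl⟩)
        · rcases Finset.mem_union.1 hv with hv | hv
          · exact ⟨{v}, Or.inl ⟨v, hv, rfl⟩, Finset.subset_union_right⟩
          · rw [Finset.mem_filter] at hv
            refine ⟨{k, v}, Or.inr ⟨k, hk, v, hv.1, hv.2, rfl⟩, ?_⟩
            intro x; simp only [Finset.mem_insert, Finset.mem_singleton, Finset.mem_union]; tauto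
        · exact ⟨{p, q}, Or.inr ⟨p, (Finset.mem_filter.1 hp).1, q, (Finset.mem_filter.1 hq).1,
            hpq, rfl⟩, Finset.subset_union_right⟩
  · have : edges G.Adj W = ∅ := by
      ext s
      simp only [edges, Set.mem_ofPred_eq, Set.mem_empty_iff_false, iff_false]
      rintro ⟨p, hp, q, hq, hpq, _⟩
      exact hE ⟨p, hp, q, hq, hpq⟩
    rw [this, Set.union_empty]
    exact RR.vars X _ _ (by simp)

def P4 (G : SimpleGraph V) : Set (Finset V) :=
  {s | ∃ p q r t, G.Adj p q ∧ G.Adj q r ∧ G.Adj r t ∧ p ≠ r ∧ p ≠ t ∧ q ≠ t ∧ s = {p, q, r, t}}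

theorem P4_of_HH (hgap : G.GapFree) {a b c d : V} (hab : G.Adj a b) (hac : a ≠ c) (had : a ≠ d)
    (hbc : b ≠ c) (hbd : b ≠ d) (h : HH G a b c d) : ({a, b, c, d} : Finset V) ∈ P4 G := by
  obtain ⟨hcd, h⟩ := h
  rcases h with h | h | h
  · rcases hgap a b c d hab h hac had hbc hbd with e | e | e | e
    · exact ⟨b, a, c, d, hab.symm, e, h, hbc, hbd, had, by grind⟩
    · exact ⟨b, a, d, c, hab.symm, e, h.symm, hbd, hbc, hac, by grind⟩
    · exact ⟨a, b, c, d, hab, e, h, hac, had, hbd, by grind⟩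
    · exact ⟨a, b, d, c, hab, e, h.symm, had, hac, hbc, by grind⟩
  · exact ⟨c, a, b, d, h.1.symm, hab, h.2, hbc.symm, hcd, had, by grind⟩
  · exact ⟨d, a, b, c, h.1.symm, hab, h.2, hbd.symm, hcd.symm, hac, by grind⟩

theorem HH_of_P4 {a b : V} {s : Finset V} (hs : s ∈ P4 G) :
    ∃ c d, c ∈ s ∧ d ∈ s ∧ a ≠ c ∧ a ≠ d ∧ b ≠ c ∧ b ≠ d ∧ HH G a b c d := by
  obtain ⟨p, q, r, t, h1, h2, h3, n1, n2, n3, rfl⟩ := hs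
  have m1 := h1.ne
  have m2 := h2.ne
  have m3 := h3.ne
  by_cases c1 : a ≠ p ∧ a ≠ q ∧ b ≠ p ∧ b ≠ q
  · exact ⟨p, q, by simp, by simp, c1.1, c1.2.1, c1.2.2.1, c1.2.2.2, m1, Or.inl h1⟩
  by_cases c2 : a ≠ r ∧ a ≠ t ∧ b ≠ r ∧ b ≠ t
  · exact ⟨r, t, by simp, by simp, c2.1, c2.2.1, c2.2.2.1, c2.2.2.2, m3, Or.inl h3⟩
  have h1' := h1.symm
  have h3' := h3.symm
  have w : ∀ c d, c ∈ ({p, q, r, t} : Finset V) → d ∈ ({p, q, r, t} : Finset V) → c ≠ d →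
      a ≠ c → a ≠ d → b ≠ c → b ≠ d → G.Adj a c → G.Adj b d →
      ∃ c d, c ∈ ({p, q, r, t} : Finset V) ∧ d ∈ ({p, q, r, t} : Finset V) ∧
        a ≠ c ∧ a ≠ d ∧ b ≠ c ∧ b ≠ d ∧ HH G a b c d :=
    fun c d hc hd k0 k1 k2 k3 k4 k5 k6 => ⟨c, d, hc, hd, k1, k2, k3, k4, k0, Or.inr (Or.inl ⟨k5, k6⟩)⟩
  have c1' : (a = p ∨ a = q ∨ b = p ∨ b = q) := by tauto
  have c2' : (a = r ∨ a = t ∨ b = r ∨ b = t) := by tauto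
  rcases c1' with e | e | e | e <;> rcases c2' with f | f | f | f <;> subst e <;>
    first
    | (subst f
       first
       | exact absurd rfl (by assumption)
       | (first
          | exact w q t (by simp) (by simp) (by grind) (by grind) (by grind) (by grind) (by grind) (by assumption) (by assumption)
          | exact w q r (by simp) (by simp) (by grind) (by grind) (by grind) (by grind) (by grind) (by assumption) (by assumption)
          | exact w p t (by simp) (by simp) (by grind) (by grind) (by grind) (by grind) (by grind) (by assumption) (by assumption)
          | exact w p r (by simp) (by simp) (by grind) (by grind) (by grind) (by grind) (by grind) (by assumption) (by assumption)
          | exact w t q (by simp) (by simp) (by grind) (by grind) (by grind) (by grind) (by grind) (by assumption) (by assumption)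
          | exact w r q (by simp) (by simp) (by grind) (by grind) (by grind) (by grind) (by grind) (by assumption) (by assumption)
          | exact w t p (by simp) (by simp) (by grind) (by grind) (by grind) (by grind) (by grind) (by assumption) (by assumption)
          | exact w r p (by simp) (by simp) (by grind) (by grind) (by grind) (by grind) (by grind) (by assumption) (by assumption)))

def EE (G : SimpleGraph V) : Set (Finset V) := {s | ∃ a b, G.Adj a b ∧ s = {a, b}}

theorem RR.colon (hgap : G.GapFree) (hcr : G.CricketFree) {a b : V} (hab : G.Adj a b)
    (F : Set (Finset V)) (hF : F ⊆ EE G) (he : {a, b} ∉ F) : RR K (P4 G ∪ F) {a, b} 3 := by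
  classical
  let X : Finset V := Finset.univ.filter (fun v => v ≠ a ∧ v ≠ b ∧ ∃ f ∈ F, f ⊆ {a, b, v})
  let W : Finset V := Finset.univ.filter (fun v => v ≠ a ∧ v ≠ b ∧ v ∉ X)
  have hcase : ∀ c d, a ≠ c → a ≠ d → b ≠ c → b ≠ d → HH G a b c d →
      ∃ t ∈ singles X ∪ edges (HH G a b) W, t ⊆ {c, d} := by
    intro c d h1 h2 h3 h4 h
    by_cases hc : c ∈ X
    · exact ⟨{c}, Or.inl ⟨c, hc, rfl⟩, by simp⟩
    by_cases hd : d ∈ X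
    · exact ⟨{d}, Or.inl ⟨d, hd, rfl⟩, by simp⟩
    refine ⟨{c, d}, Or.inr ⟨c, ?_, d, ?_, h, rfl⟩, subset_rfl⟩
    · simp only [W, Finset.mem_filter]; exact ⟨by simp, h1.symm, h3.symm, hc⟩
    · simp only [W, Finset.mem_filter]; exact ⟨by simp, h2.symm, h4.symm, hd⟩
  have hlin : RR K (singles X ∪ edges (HH G a b) W) {a, b} 3 := by
    refine RR.lin (HH G a b) (HH_symm G a b) _ _ ?_ _ _ ?_
    · have := Finset.card_le_two (a := a) (b := b); omega
    · intro W' hW' hE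
      refine key hgap hcr hab W' ?_ ?_ hE
      · intro h; exact (Finset.mem_filter.1 (hW' h)).2.1 rfl
      · intro h; exact (Finset.mem_filter.1 (hW' h)).2.2.1 rfl
  refine RR.congr hlin ?_ ?_
  · rintro s (hs | hs)
    · obtain ⟨c, d, hc, hd, h1, h2, h3, h4, h⟩ := HH_of_P4 (a := a) (b := b) hs
      obtain ⟨t, ht, hts⟩ := hcase c d h1 h2 h3 h4 h
      refine ⟨t, ht, hts.trans ?_⟩
      intro x hx
      simp only [Finset.mem_insert, Finset.mem_singleton] at hx
      rcases hx with rfl | rfl <;> simp [hc, hd]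
    · obtain ⟨c, d, hcd, rfl⟩ := hF hs
      have hne := hcd.ne
      by_cases hdis : a ≠ c ∧ a ≠ d ∧ b ≠ c ∧ b ≠ d
      · obtain ⟨t, ht, hts⟩ := hcase c d hdis.1 hdis.2.1 hdis.2.2.1 hdis.2.2.2 ⟨hcd.ne, Or.inl hcd⟩
        exact ⟨t, ht, hts.trans Finset.subset_union_right⟩
      · have hv : ∃ v, v ∈ ({c, d} : Finset V) ∧ v ≠ a ∧ v ≠ b ∧ ({c, d} : Finset V) ⊆ {a, b, v} := by
          have n1 : ¬ (c = a ∧ d = b) := by rintro ⟨rfl, rfl⟩; exact he hs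
          have n2 : ¬ (c = b ∧ d = a) := by
            rintro ⟨rfl, rfl⟩; rw [Finset.pair_comm] at he; exact he hs
          by_cases hc : c = a ∨ c = b
          · refine ⟨d, by simp, by grind, by grind, by grind⟩
          · refine ⟨c, by simp, by grind, by grind, by grind⟩
        obtain ⟨v, hv, hva, hvb, hvs⟩ := hv
        exact ⟨{v}, Or.inl ⟨v, by simp only [X, Finset.mem_filter]; exact ⟨by simp, hva, hvb, _, hs, hvs⟩, rfl⟩,
          by rw [Finset.singleton_subset_iff]; exact Finset.mem_union_right _ hv⟩
  · rintro s (⟨v, hv, rfl⟩ | ⟨c, hc, d, hd, hcd, rfl⟩)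
    · simp only [X, Finset.mem_filter] at hv
      obtain ⟨_, _, _, f, hf, hfs⟩ := hv
      refine ⟨f, Or.inr hf, hfs.trans ?_⟩
      intro x; simp only [Finset.mem_insert, Finset.mem_singleton, Finset.mem_union]; tauto
    · simp only [W, Finset.mem_filter] at hc hd
      refine ⟨{a, b, c, d}, Or.inl (P4_of_HH hgap hab hc.2.1.symm hd.2.1.symm hc.2.2.1.symm
        hd.2.2.1.symm hcd), ?_⟩
      intro x; simp only [Finset.mem_insert, Finset.mem_singleton, Finset.mem_union]; tauto

theorem RR.main (hgap : G.GapFree) (hcr : G.CricketFree) : RR K (P4 G) ∅ 3 := by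
  classical
  have h : ∀ F : Finset (Finset V), (F : Set (Finset V)) ⊆ EE G →
      RR K (P4 G ∪ (EE G \ F)) ∅ 3 := by
    intro F
    induction F using Finset.induction_on with
    | empty =>
      intro _
      refine RR.congr (RR.edgeIdeal hgap hcr Finset.univ ∅) ?_ ?_
      · rintro s (⟨p, q, r, t, h1, h2, h3, n1, n2, n3, rfl⟩ | ⟨⟨p, q, h, rfl⟩, _⟩)
        · exact ⟨{p, q}, Or.inr ⟨p, by simp, q, by simp, h1, rfl⟩, by intro x; simp; tauto⟩
        · exact ⟨{p, q}, Or.inr ⟨p, by simp, q, by simp, h, rfl⟩, by simp⟩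
      · rintro s (⟨v, hv, rfl⟩ | ⟨c, hc, d, hd, hcd, rfl⟩)
        · simp at hv
        · exact ⟨{c, d}, Or.inr ⟨⟨c, d, hcd, rfl⟩, by simp⟩, by simp⟩
    | insert e F heF ih =>
      intro hsub
      have he : e ∈ EE G := hsub (by simp)
      have ih' := ih (fun x hx => hsub (by simp [show x ∈ F from hx]))
      refine RR.rem (u := e) ?_ ?_
      · refine RR.congr ih' ?_ ?_
        · rintro s (rfl | hs | hs)
          · exact ⟨s, Or.inr ⟨he, by simpa using heF⟩, by simp⟩
          · exact ⟨s, Or.inl hs, by simp⟩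
          · exact ⟨s, Or.inr ⟨hs.1, fun h => hs.2 (by simp [show s ∈ F from h])⟩, by simp⟩
        · rintro s (hs | hs)
          · exact ⟨s, Or.inr (Or.inl hs), by simp⟩
          · by_cases hse : s = e
            · exact ⟨s, Or.inl hse, by simp⟩
            · exact ⟨s, Or.inr (Or.inr ⟨hs.1, fun h => by
                rcases Finset.mem_insert.1 (Finset.mem_coe.1 h) with h | h
                · exact hse h
                · exact hs.2 h⟩), by simp⟩
      · obtain ⟨a, b, hab, rfl⟩ := he
        rw [Finset.empty_union]
        exact RR.colon hgap hcr hab _ Set.sdiff_subset (fun h => h.2 (by simp))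
  have hfin := h (Set.toFinite (EE G)).toFinset (by simp)
  simpa using hfin

end Sets
end TV

namespace TV
open Finsupp
set_option linter.unusedSectionVars false
section Final
variable {V K : Type*} [Fintype V] [DecidableEq V] [Field K]

theorem mon_eq (p q r t : V) (h1 : p ≠ q) (h2 : p ≠ r) (h3 : p ≠ t) (h4 : q ≠ r) (h5 : q ≠ t)
    (h6 : r ≠ t) : mon {p, q, r, t} =
      Finsupp.single p 1 + (Finsupp.single q 1 + (Finsupp.single r 1 + Finsupp.single t 1)) := by
  ext v
  simp only [mon_apply, Finsupp.add_apply, Finsupp.single_apply, Finset.mem_insert,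
    Finset.mem_singleton]
  by_cases e1 : v = p
  · subst e1; simp [h1.symm, h2.symm, h3.symm]
  by_cases e2 : v = q
  · subst e2; simp [h1, h4.symm, h5.symm]
  by_cases e3 : v = r
  · subst e3; simp [h2, h4, h6.symm]
  by_cases e4 : v = t
  · subst e4; simp [h3, h5, h6]
  simp [e1, e2, e3, e4, Ne.symm e1, Ne.symm e2, Ne.symm e3, Ne.symm e4]

theorem prod_eq (p q r t : V) (h1 : p ≠ q) (h2 : p ≠ r) (h3 : p ≠ t) (h4 : q ≠ r) (h5 : q ≠ t)
    (h6 : r ≠ t) : (([p, q, r, t] : List V).map (X : V → MvPolynomial V K)).prod =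
      monomial (mon {p, q, r, t}) 1 := by
  rw [mon_eq p q r t h1 h2 h3 h4 h5 h6]
  simp [X, monomial_mul]

theorem path_eq (G : SimpleGraph V) : pathIdeal (K := K) G 4 =
    Ideal.span ((fun s => monomial s (1 : K)) '' (mon '' P4 G)) := by
  unfold pathIdeal
  congr 1
  ext f
  constructor
  · rintro ⟨l, ⟨hc, hn⟩, hl, rfl⟩
    match l, hl with
    | [p, q, r, t], _ =>
      change List.IsChain _ _ at hc
      simp only [List.isChain_cons_cons, List.nodup_cons, List.mem_cons, List.not_mem_nil] at hc hn
      push Not at hn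
      obtain ⟨a1, a2, a3, -⟩ := hc
      obtain ⟨⟨b1, b2, b3, -⟩, ⟨b4, b5, -⟩, ⟨b6, -⟩, -⟩ := hn
      exact ⟨_, ⟨_, ⟨p, q, r, t, a1, a2, a3, b2, b3, b5, rfl⟩, rfl⟩,
        (prod_eq p q r t b1 b2 b3 b4 b5 b6).symm⟩
  · rintro ⟨_, ⟨_, ⟨p, q, r, t, a1, a2, a3, b2, b3, b5, rfl⟩, rfl⟩, rfl⟩
    refine ⟨[p, q, r, t], ⟨?_, ?_⟩, rfl,
      (prod_eq p q r t a1.ne b2 b3 a2.ne b5 a3.ne).symm⟩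
    · change List.IsChain _ _
      simp [a1, a2, a3]
    · simp [a1.ne, b2, b3, a2.ne, b5, a3.ne]

theorem mem_mono {S : Set (V →₀ ℕ)} {m : V →₀ ℕ}
    (h : monomial m (1 : K) ∈ Ideal.span ((fun s => monomial s (1 : K)) '' S)) :
    ∃ s ∈ S, s ≤ m := by
  rw [MvPolynomial.mem_ideal_span_monomial_image] at h
  exact h m (by simp [MvPolynomial.support_monomial])

theorem span_eq' {k : ℕ} (gens : Fin k → V →₀ ℕ) : monomialSpan (K := K) gens =
    Ideal.span ((fun s => monomial s (1 : K)) '' Set.range gens) := by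
  unfold monomialSpan
  rw [← Set.range_comp]; rfl

theorem mon_empty : (mon (∅ : Finset V)) = ⊥ := by
  ext v; simp only [mon_apply, Finset.notMem_empty, if_false]; rfl

theorem LL_bot {k : ℕ} (gens : Fin k → V →₀ ℕ) (T : Finset (Fin k)) :
    LL gens ⊥ T = taylorLcm gens T := by
  simp [LL, taylorLcm]

theorem diff_eq {k : ℕ} (gens : Fin k → V →₀ ℕ) :
    taylorDiff (K := K) gens = bd gens ⊥ := by
  refine Finsupp.lhom_ext' fun T => LinearMap.ext_ring ?_
  simp only [LinearMap.comp_apply, Finsupp.lsingle_apply, bd_single]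
  simp only [taylorDiff, Finsupp.lsum_single, LinearMap.toSpanSingleton_apply, one_smul]
  unfold taylorBoundary bdT
  refine Finset.sum_congr rfl fun t _ => ?_
  rw [LL_bot, LL_bot]
  simp [sg]

theorem piece_eq {k : ℕ} (gens : Fin k → V →₀ ℕ) (i j : ℕ) :
    taylorPiece (K := K) gens i j =
      supported K K (pieceSet gens monomialDegree Finset.univ ⊥ i j) := by
  rw [supported_eq_span_single]
  unfold taylorPiece
  congr 1
  ext f
  constructor
  · rintro ⟨T, h1, h2, rfl⟩
    exact ⟨T, ⟨Finset.subset_univ _, h1, by rw [LL_bot]; exact h2⟩, rfl⟩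
  · rintro ⟨T, ⟨_, h1, h2⟩, rfl⟩
    exact ⟨T, h1, by rw [LL_bot] at h2; exact h2, rfl⟩

theorem upper {G : SimpleGraph V} (hgap : G.GapFree) (hcr : G.CricketFree) {k : ℕ}
    (gens : Fin k → V →₀ ℕ) (he : pathIdeal (K := K) G 4 = monomialSpan gens) :
    Van K gens monomialDegree Finset.univ ⊥ 3 := by
  rw [path_eq, span_eq'] at he
  have e1 : ∀ i, ∃ P ∈ P4 G, mon P ≤ gens i := by
    intro i
    have : monomial (gens i) (1 : K) ∈
        Ideal.span ((fun s => monomial s (1 : K)) '' (mon '' P4 G)) := by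
      rw [he]; exact Ideal.subset_span ⟨_, ⟨i, rfl⟩, rfl⟩
    obtain ⟨_, ⟨P, hP, rfl⟩, h⟩ := mem_mono this
    exact ⟨P, hP, h⟩
  have e2 : ∀ P ∈ P4 G, ∃ i, gens i ≤ mon P := by
    intro P hP
    have : monomial (mon P) (1 : K) ∈
        Ideal.span ((fun s => monomial s (1 : K)) '' Set.range gens) := by
      rw [← he]; exact Ideal.subset_span ⟨_, ⟨P, hP, rfl⟩, rfl⟩
    obtain ⟨_, ⟨i, rfl⟩, h⟩ := mem_mono this
    exact ⟨i, h⟩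
  obtain ⟨s, hs⟩ := exists_surjective_nat (V →₀ ℕ)
  let g : ℕ → V →₀ ℕ := fun n => if h : n < k then gens ⟨n, h⟩ else s (n - k)
  have hg : Function.Surjective g := by
    intro m
    obtain ⟨n, rfl⟩ := hs m
    exact ⟨n + k, by simp [g]⟩
  have hgi : ∀ i : Fin k, g i = gens i := fun i => by simp [g]
  obtain ⟨A, hA1, hA2⟩ := lift (P4 G) g hg
  have hv := RR.main (K := K) hgap hcr g hg A hA1 hA2
  rw [mon_empty] at hv
  refine Van.transport (Fin.valOrderEmb k) (g' := g) (fun i => hgi i) ?_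
  refine Van.congr ?_ ?_ hv
  · intro u hu
    simp only [Finset.mem_map, Finset.mem_univ, true_and] at hu
    obtain ⟨i, rfl⟩ := hu
    obtain ⟨P, hP, h⟩ := e1 i
    obtain ⟨a, ha, e⟩ := hA2 P hP
    refine ⟨a, ha, ?_⟩
    rw [bot_sup_eq, e]
    exact h.trans (hgi i).ge
  · intro u hu
    obtain ⟨P, hP, e⟩ := hA1 u hu
    obtain ⟨i, h⟩ := e2 P hP
    refine ⟨(i : ℕ), by simp, ?_⟩
    rw [bot_sup_eq, e, hgi]
    exact h

theorem P4_card {G : SimpleGraph V} {P : Finset V} (h : P ∈ P4 G) : P.card = 4 := by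
  obtain ⟨p, q, r, t, a1, a2, a3, b2, b3, b5, rfl⟩ := h
  rw [Finset.card_eq_succ]
  refine ⟨p, {q, r, t}, ?_, rfl, ?_⟩
  · simp [a1.ne, b2, b3]
  · exact Finset.card_eq_three.2 ⟨q, r, t, a2.ne, b5, a3.ne, rfl⟩

theorem lower {G : SimpleGraph V} (h4 : pathIdeal (K := K) G 4 ≠ ⊥) :
    IdealTorNonzero (pathIdeal (K := K) G 4) 0 4 := by
  have hne : (P4 G).Nonempty := by
    by_contra h
    rw [Set.not_nonempty_iff_eq_empty] at h
    apply h4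
    rw [path_eq, h]; simp
  obtain ⟨P, hP⟩ := hne
  let F := (Set.toFinite (P4 G)).toFinset
  have hF : ∀ x, x ∈ F ↔ x ∈ P4 G := fun x => Set.Finite.mem_toFinset _
  let e := F.equivFin
  let gens : Fin F.card → V →₀ ℕ := fun i => mon (e.symm i).1
  have hmem : ∀ i, (e.symm i).1 ∈ P4 G := fun i => (hF _).1 (e.symm i).2
  refine ⟨F.card, gens, ?_, ?_⟩
  · rw [path_eq, span_eq']
    congr 2
    ext m
    constructor
    · rintro ⟨Q, hQ, rfl⟩
      exact ⟨e ⟨Q, (hF Q).2 hQ⟩, by simp [gens]⟩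
    · rintro ⟨i, rfl⟩
      exact ⟨_, hmem i, rfl⟩
  · unfold taylorHomologyNonzero
    rw [diff_eq, piece_eq, piece_eq]
    intro hle
    let i0 := e ⟨P, (hF P).2 hP⟩
    have hz : (single {i0} 1 : Finset (Fin F.card) →₀ K) ∈ LinearMap.ker (bd (K := K) gens ⊥) ⊓
        supported K K (pieceSet gens monomialDegree Finset.univ ⊥ (0 + 1) 4) := by
      refine ⟨?_, single_mem_supported _ _ ⟨Finset.subset_univ _, by simp, ?_⟩⟩
      · rw [SetLike.mem_coe, LinearMap.mem_ker, bd_single, bdT, Finset.sum_singleton, if_neg]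
        intro h
        simp only [Finset.erase_singleton, LL, Finset.sup_empty, Finset.sup_singleton,
          bot_sup_eq] at h
        have h' := congrArg monomialDegree h
        have : monomialDegree (gens i0) = 4 := by
          simp only [gens]; rw [mon_deg, P4_card (hmem i0)]
        rw [this, ← mon_empty, mon_deg] at h'
        simp at h'
      · simp only [LL, Finset.sup_singleton, bot_sup_eq, gens]
        rw [mon_deg, P4_card (hmem i0)]
    obtain ⟨w, hw, hwz⟩ := hle hz
    have hem : pieceSet gens monomialDegree Finset.univ ⊥ (0 + 1 + 1) 4 = ∅ := by
      rw [Set.eq_empty_iff_forall_notMem]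
      rintro T ⟨-, h2, h3⟩
      obtain ⟨x, y, hxy, rfl⟩ := Finset.card_eq_two.1 h2
      simp only [LL, Finset.sup_insert, Finset.sup_singleton, bot_sup_eq, gens] at h3
      rw [mon_sup, mon_deg] at h3
      have c1 := P4_card (hmem x)
      have c2 := P4_card (hmem y)
      have s1 := Finset.eq_of_subset_of_card_le
        (Finset.subset_union_left (s₁ := (e.symm x).1) (s₂ := (e.symm y).1)) (by omega)
      have s2 := Finset.eq_of_subset_of_card_le
        (Finset.subset_union_right (s₁ := (e.symm x).1) (s₂ := (e.symm y).1)) (by omega)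
      exact hxy (e.symm.injective (Subtype.ext (s1.trans s2.symm)))
    rw [hem] at hw
    have hw0 : w = 0 := by simpa using hw
    rw [hw0, map_zero] at hwz
    exact absurd hwz.symm (by simp)

end Final
end TV

/-- If `G` is gap-free and cricket-free with `I_4(G) ≠ 0`, then `I_4(G)`
has a linear minimal free resolution, i.e. `reg (I_4(G)) = 4`. -/
theorem stmt9 {V K : Type*} [Fintype V] [Field K] (G : SimpleGraph V)
    (hgap : G.GapFree) (hcricket : G.CricketFree)
    (h4 : pathIdeal (K := K) G 4 ≠ ⊥) :
    reg (pathIdeal (K := K) G 4) = 4 := by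
  classical
  unfold reg
  refine IsGreatest.csSup_eq ⟨⟨0, 4, TV.lower h4, rfl⟩, ?_⟩
  rintro d ⟨i, j, ⟨k, gens, he, hn⟩, rfl⟩
  by_contra hlt
  apply hn
  rw [TV.diff_eq, TV.piece_eq, TV.piece_eq]
  rintro z ⟨hz1, hz2⟩
  exact TV.upper hgap hcricket gens he (i + 1) j (by omega) z hz2 hz1
end

section
/- Let G be a finite simple graph that is gap-free and claw-free, and let t ≥ 3 with I_t(G) ≠ 0. If e is a minimal monomial generator of the t-path ideal I_t(G), then the colon ideal (I_{t+1}(G) : e) is generated by variables. -/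
open MvPolynomial

/-! Combinatorial part -/

/-- `w` cannot be added to `l` so that the result is traceable. -/
def NotGood {V : Type*} (G : SimpleGraph V) (w : V) (l : List V) : Prop :=
  ∀ l' : List V, l'.Perm (w :: l) → ¬ l'.IsChain G.Adj

lemma chain_rev {V : Type*} {G : SimpleGraph V} {l : List V} (h : l.IsChain G.Adj) :
    l.reverse.IsChain G.Adj := by
  rw [List.isChain_reverse]
  exact h.imp (fun a b hab => hab.symm)

lemma NotGood.perm {V : Type*} {G : SimpleGraph V} {w : V} {l m : List V}
    (h : NotGood G w l) (hp : m.Perm l) : NotGood G w m :=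
  fun l' hl' => h l' (hl'.trans (hp.cons w))

lemma ng_head {V : Type*} {G : SimpleGraph V} {w h : V} {R : List V}
    (hc : (h :: R).IsChain G.Adj) (hn : NotGood G w (h :: R)) : ¬ G.Adj w h := by
  intro hw
  exact hn (w :: h :: R) (List.Perm.refl _) (by simp [List.isChain_cons_cons, hw, hc])

lemma ng_last {V : Type*} {G : SimpleGraph V} {w h : V} {R : List V}
    (hc : (R ++ [h]).IsChain G.Adj) (hn : NotGood G w (R ++ [h])) : ¬ G.Adj w h := by
  have h1 := chain_rev hc
  rw [List.reverse_append] at h1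
  refine ng_head (R := R.reverse) (by simpa using h1) (hn.perm ?_)
  have := List.reverse_perm (R ++ [h])
  simpa using this

lemma ng_split {V : Type*} {G : SimpleGraph V} (hclaw : G.ClawFree) {w c : V} {A B : List V}
    (hc : (A ++ c :: B).IsChain G.Adj) (hnd : (A ++ c :: B).Nodup) (hw : w ∉ A ++ c :: B)
    (hn : NotGood G w (A ++ c :: B)) (hwc : G.Adj w c) :
    ∃ A' a b B', A = A' ++ [a] ∧ B = b :: B' ∧ G.Adj a b ∧ ¬ G.Adj w a ∧ ¬ G.Adj w b := by
  rcases List.eq_nil_or_concat' A with rfl | ⟨A', a, rfl⟩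
  · exact absurd hwc (ng_head hc hn)
  rcases B with _ | ⟨b, B'⟩
  · exact absurd hwc (ng_last hc hn)
  refine ⟨A', a, b, B', rfl, rfl, ?_⟩
  have h1 : ¬ G.Adj w a := by
    intro hwa
    refine hn (A' ++ [a] ++ w :: c :: b :: B') List.perm_middle ?_
    have := hwa.symm
    simp [List.isChain_append, List.isChain_cons_cons] at hc ⊢
    grind
  have h2 : ¬ G.Adj w b := by
    intro hwa
    refine hn ((A' ++ [a] ++ [c]) ++ w :: b :: B') (List.perm_middle.trans (by simp)) ?_
    have := hwc.symm
    simp [List.isChain_append, List.isChain_cons_cons] at hc ⊢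
    grind
  refine ⟨?_, h1, h2⟩
  have hac : G.Adj c a := by
    simp [List.isChain_append, List.isChain_cons_cons] at hc
    have := hc.2.1; grind [SimpleGraph.Adj.symm]
  have hcb : G.Adj c b := by
    simp [List.isChain_append, List.isChain_cons_cons] at hc
    have := hc.2.1; grind
  have hab : a ≠ b := by rintro rfl; simp [List.nodup_append] at hnd
  have hwa : a ≠ w := by rintro rfl; simp at hw
  have hwb : b ≠ w := by rintro rfl; simp at hw
  rcases hclaw c a b w hac hcb hwc.symm hab hwa hwb with h | h | h
  · exact h
  · exact absurd h.symm h1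
  · exact absurd h.symm h2

lemma ng_head_c {V : Type*} {G : SimpleGraph V} (hclaw : G.ClawFree) {w c h : V} {R : List V}
    (hc : (h :: R).IsChain G.Adj) (hnd : (h :: R).Nodup) (hw : w ∉ h :: R)
    (hn : NotGood G w (h :: R)) (hwc : G.Adj w c) (hcl : c ∈ h :: R) : ¬ G.Adj c h := by
  intro hch
  obtain ⟨A, B, hAB⟩ := List.append_of_mem hcl
  have hc' := hc
  rw [hAB] at hc' hnd hw
  obtain ⟨A', a, b, B', rfl, rfl, hab, h1, h2⟩ :=
    ng_split hclaw hc' hnd hw (hAB ▸ hn) hwc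
  refine hn (w :: c :: (A' ++ [a] ++ b :: B')) ?_ ?_
  · rw [hAB]; exact (List.perm_middle.symm).cons w
  · rcases A' with _ | ⟨x, A''⟩
    · simp at hAB
      simp [List.isChain_cons_cons] at hc' ⊢
      grind
    · simp at hAB
      simp [List.isChain_append, List.isChain_cons] at hc' ⊢
      grind

lemma ng_unique_aux {V : Type*} {G : SimpleGraph V} (hgap : G.GapFree) (hclaw : G.ClawFree)
    {w c c' : V} {A B : List V}
    (hc : (A ++ c :: B).IsChain G.Adj) (hnd : (A ++ c :: B).Nodup) (hw : w ∉ A ++ c :: B)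
    (hn : NotGood G w (A ++ c :: B)) (hwc : G.Adj w c) (hwc' : G.Adj w c') (hB : c' ∈ B) :
    False := by
  obtain ⟨A, a, b, B, rfl, rfl, hab, hwa, hwb⟩ := ng_split hclaw hc hnd hw hn hwc
  have hcb : c' ≠ b := by rintro rfl; exact hwb hwc'
  have hB' : c' ∈ B := by simpa [hcb] using hB
  obtain ⟨S, T, rfl⟩ := List.append_of_mem hB'
  have e1 : A ++ [a] ++ c :: b :: (S ++ c' :: T) = (A ++ [a] ++ c :: b :: S) ++ c' :: T := by simp
  obtain ⟨A2, a', b', T, hA2, rfl, hab', hwa', hwb'⟩ :=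
    ng_split hclaw (e1 ▸ hc) (e1 ▸ hnd) (e1 ▸ hw) (e1 ▸ hn) hwc'
  have hlast : (b :: S).getLast? = some a' := by
    have := congrArg List.getLast? hA2
    simpa [List.getLast?_append, List.getLast?_cons] using this
  have hbS : (b :: S).IsChain G.Adj := by
    simp [List.isChain_append, List.isChain_cons_cons] at hc
    simp [List.isChain_append, List.isChain_cons] at hc ⊢
    grind
  have hT : (b' :: T).IsChain G.Adj := by
    simp [List.isChain_append, List.isChain_cons] at hc ⊢
    grind
  have hA : (A ++ [a]).IsChain G.Adj := by
    simp [List.isChain_append, List.isChain_cons] at hc ⊢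
    grind
  have hca : G.Adj a c := by
    simp [List.isChain_append, List.isChain_cons] at hc
    grind
  have hcb2 : G.Adj c b := by
    simp [List.isChain_append, List.isChain_cons] at hc
    grind
  have hST : (b :: S ++ b' :: T).IsChain G.Adj := by
    rw [List.isChain_append]
    refine ⟨hbS, hT, ?_⟩
    rw [hlast]
    simpa using hab'
  have hdist : a ≠ w ∧ b ≠ w ∧ a ≠ c' := by
    simp [List.nodup_append] at hnd hw
    grind
  rcases hgap a b w c' hab hwc' hdist.1 hdist.2.2 hdist.2.1 hcb.symm with h | h | h | h
  · exact hwa h.symm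
  · refine hn ((A ++ [a]) ++ (c' :: w :: c :: (b :: S ++ b' :: T))) ?_ ?_
    · classical
      rw [List.perm_iff_count]
      intro x
      simp [List.count_cons]
      omega
    · rw [List.isChain_append]
      refine ⟨hA, ?_, ?_⟩
      · simp only [List.isChain_cons_cons, List.cons_append]
        exact ⟨hwc'.symm, hwc, hcb2, hST⟩
      · simpa using h
  · exact hwb h.symm
  · refine hn ((A ++ [a]) ++ (c :: w :: c' :: (b :: S ++ b' :: T))) ?_ ?_
    · classical
      rw [List.perm_iff_count]
      intro x
      simp [List.count_cons]
      omega
    · rw [List.isChain_append]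
      refine ⟨hA, ?_, ?_⟩
      · simp only [List.isChain_cons_cons, List.cons_append]
        exact ⟨hwc.symm, hwc', h.symm, hST⟩
      · simpa using hca

lemma ng_unique {V : Type*} {G : SimpleGraph V} (hgap : G.GapFree) (hclaw : G.ClawFree)
    {w c c' : V} {l : List V}
    (hc : l.IsChain G.Adj) (hnd : l.Nodup) (hw : w ∉ l)
    (hn : NotGood G w l) (hwc : G.Adj w c) (hwc' : G.Adj w c') (hcl : c ∈ l) (hcl' : c' ∈ l) :
    c = c' := by
  by_contra hne
  obtain ⟨A, B, rfl⟩ := List.append_of_mem hcl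
  have : c' ∈ A ∨ c' ∈ B := by
    simp at hcl'
    grind
  rcases this with h | h
  · have e : (A ++ c :: B).reverse = B.reverse ++ c :: A.reverse := by simp
    refine ng_unique_aux hgap hclaw (A := B.reverse) (B := A.reverse) (e ▸ chain_rev hc)
      (e ▸ List.nodup_reverse.2 hnd) ?_ (e ▸ hn.perm (List.reverse_perm _)) hwc hwc' (by simpa using h)
    rw [← e]; exact fun h => hw (List.mem_reverse.1 h)
  · exact ng_unique_aux hgap hclaw hc hnd hw hn hwc hwc' h

/-- the head of `l` has a unique neighbour in `l`. -/
lemma ng_end_unique {V : Type*} {G : SimpleGraph V} (hgap : G.GapFree) (hclaw : G.ClawFree)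
    {w c p q x : V} {R : List V}
    (hc : (p :: q :: R).IsChain G.Adj) (hnd : (p :: q :: R).Nodup) (hw : w ∉ p :: q :: R)
    (hn : NotGood G w (p :: q :: R)) (hwc : G.Adj w c) (hcl : c ∈ p :: q :: R)
    (hx : x ∈ R) (hpx : G.Adj p x) : False := by
  obtain ⟨S, T, rfl⟩ := List.append_of_mem hx
  obtain ⟨S', y, hS⟩ : ∃ S' y, q :: S = S' ++ [y] := by
    rcases List.eq_nil_or_concat' (q :: S) with h | ⟨A', a, h⟩
    · simp at h
    · exact ⟨A', a, h⟩
  have e : p :: q :: (S ++ x :: T) = p :: (S' ++ [y]) ++ x :: T := by rw [← hS]; simp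
  have hwp := ng_head hc hn
  have hcp := ng_head_c hclaw hc hnd hw hn hwc hcl
  rw [e] at hc hnd hw hn hcl
  have hperm : (y :: (S'.reverse ++ p :: x :: T)).Perm (p :: (S' ++ [y]) ++ x :: T) := by
    classical
    rw [List.perm_iff_count]
    intro z
    simp [List.count_cons]
    omega
  have hch : (y :: (S'.reverse ++ p :: x :: T)).IsChain G.Adj := by
    have h1 : (p :: (S' ++ [y])).IsChain G.Adj := (List.isChain_append.1 hc).1
    have h2 := (List.isChain_append.1 hc).2.1
    have h3 := chain_rev h1
    have h4 : (p :: (S' ++ [y])).reverse ++ x :: T = y :: (S'.reverse ++ p :: x :: T) := by simp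
    rw [← h4, List.isChain_append]
    refine ⟨h3, h2, ?_⟩
    rw [List.getLast?_reverse]
    simpa using hpx
  have hn' := hn.perm hperm
  have hwy := ng_head hch hn'
  have hcy := ng_head_c hclaw hch (hperm.nodup_iff.2 hnd) (fun h => hw (hperm.mem_iff.1 h)) hn' hwc
    (hperm.mem_iff.2 hcl)
  have hyx : G.Adj y x := by
    have := (List.isChain_append.1 hc).2.2
    simpa [List.getLast?_cons, List.getLast?_append] using this
  have hpy : p ≠ y := by rintro rfl; simp at hnd
  have hcp' : c ≠ p := by rintro rfl; exact hwp hwc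
  have hcx : c ≠ x := by rintro rfl; exact hcp hpx.symm
  have hcy' : c ≠ y := by rintro rfl; exact hwy hwc
  have hw3 : w ≠ p ∧ w ≠ x ∧ w ≠ y := by
    simp at hw; grind
  have hmx : x ∈ p :: (S' ++ [y]) ++ x :: T := by simp
  have hwx : ¬ G.Adj w x := fun h => hcx (ng_unique hgap hclaw hc hnd hw hn hwc h hcl hmx)
  have hcxa : G.Adj c x := by
    rcases hgap w c p x hwc hpx hw3.1 hw3.2.1 hcp' hcx with h | h | h | h
    · exact absurd h hwp
    · exact absurd h hwx
    · exact absurd h hcp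
    · exact h
  have hpya : G.Adj p y := by
    rcases hclaw x c p y hcxa.symm hpx.symm hyx.symm hcp' hcy' hpy with h | h | h
    · exact absurd h hcp
    · exact absurd h hcy
    · exact h
  rcases hgap w c p y hwc hpya hw3.1 hw3.2.2 hcp' hcy' with h | h | h | h <;> contradiction

lemma two_nbrs {V : Type*} {G : SimpleGraph V} {m : V} {A B : List V}
    (hc : (A ++ m :: B).IsChain G.Adj) (hnd : (A ++ m :: B).Nodup) (hA : A ≠ []) (hB : B ≠ []) :
    ∃ x y, x ∈ A ∧ y ∈ B ∧ x ≠ y ∧ G.Adj m x ∧ G.Adj m y := by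
  rcases List.eq_nil_or_concat' A with rfl | ⟨A', a, rfl⟩
  · exact absurd rfl hA
  rcases B with _ | ⟨b, B'⟩
  · exact absurd rfl hB
  refine ⟨a, b, by simp, by simp, ?_, ?_, ?_⟩
  · rintro rfl; simp [List.nodup_append] at hnd
  · simp [List.isChain_append, List.isChain_cons_cons] at hc
    have := hc.2.1; grind [SimpleGraph.Adj.symm]
  · simp [List.isChain_append, List.isChain_cons_cons] at hc
    have := hc.2.1; grind

lemma comb_indep {V : Type*} {G : SimpleGraph V} (hgap : G.GapFree) (hclaw : G.ClawFree)
    {l : List V} (hc : l.IsChain G.Adj) (hnd : l.Nodup) (hl : 3 ≤ l.length) {w v : V}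
    (hw : w ∉ l) (hv : v ∉ l) (hnw : NotGood G w l) (hnv : NotGood G v l) : ¬ G.Adj w v := by
  intro hwv
  rcases l with _ | ⟨p, _ | ⟨q, R⟩⟩
  · simp at hl
  · simp at hl
  have hpq : G.Adj p q := by simp [List.isChain_cons_cons] at hc; exact hc.1
  have hq : q ∈ p :: q :: R := by simp
  have hwd : w ≠ p ∧ w ≠ q := by simp at hw; grind
  have hvd : v ≠ p ∧ v ≠ q := by simp at hv; grind
  rcases hgap w v p q hwv hpq hwd.1 hwd.2 hvd.1 hvd.2 with h | h | h | h
  · exact ng_head hc hnw h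
  · exact ng_head_c hclaw hc hnd hw hnw h hq hpq.symm
  · exact ng_head hc hnv h
  · exact ng_head_c hclaw hc hnd hv hnv h hq hpq.symm

lemma perm_of_len {V : Type*} {A B : List V} (hA : A.Nodup) (hs : A ⊆ B)
    (hlen : B.length ≤ A.length) : A.Perm B :=
  (hA.subperm hs).perm_of_length_le hlen

/-- The head of `l` cannot be an interior vertex of the big path. -/
lemma comb_end {V : Type*} {G : SimpleGraph V} (hgap : G.GapFree) (hclaw : G.ClawFree)
    {l M : List V} {p q1 q2 c : V} (hc : l.IsChain G.Adj) (hnd : l.Nodup) (hl : 3 ≤ l.length)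
    (hp : l.head? = some p)
    (hQ : (q1 :: (M ++ [q2])).IsChain G.Adj) (hQn : (q1 :: (M ++ [q2])).Nodup) (hM : M ⊆ l)
    (h1 : q1 ∉ l) (h2 : q2 ∉ l) (hn1 : NotGood G q1 l) (hn2 : NotGood G q2 l)
    (hwc : G.Adj q1 c) (hcl : c ∈ l) (hpM : p ∈ M) : False := by
  rcases l with _ | ⟨p', _ | ⟨q, R⟩⟩
  · simp at hl
  · simp at hl
  obtain rfl : p' = p := by simpa using hp
  obtain ⟨M1, M2, rfl⟩ := List.append_of_mem hpM
  have e : q1 :: (M1 ++ p' :: M2 ++ [q2]) = (q1 :: M1) ++ p' :: (M2 ++ [q2]) := by simp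
  obtain ⟨x, y, hx, hy, hxy, hpx, hpy⟩ := two_nbrs (e ▸ hQ) (e ▸ hQn) (by simp) (by simp)
  have hq1 := ng_head hc hn1
  have hq2 := ng_head hc hn2
  have hx' : x ∈ M1 := by
    rcases List.mem_cons.1 hx with rfl | h
    · exact absurd hpx.symm hq1
    · exact h
  have hy' : y ∈ M2 := by
    rcases List.mem_append.1 hy with h | h
    · exact h
    · obtain rfl : y = q2 := by simpa using h
      exact absurd hpy.symm hq2
  have hxl : x ∈ p' :: q :: R := hM (by simp [hx'])
  have hyl : y ∈ p' :: q :: R := hM (by simp [hy'])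
  have hxp := hpx.ne'
  have hyp := hpy.ne'
  have key : ∀ z, z ∈ p' :: q :: R → G.Adj p' z → z = q := by
    intro z hz hpz
    have := hpz.ne'
    by_contra hzq
    have hzR : z ∈ R := by simpa [this, hzq] using hz
    exact ng_end_unique hgap hclaw hc hnd h1 hn1 hwc hcl hzR hpz
  exact hxy ((key x hxl hpx).trans (key y hyl hpy).symm)

lemma comb_main {V : Type*} {G : SimpleGraph V} (hgap : G.GapFree) (hclaw : G.ClawFree)
    {l Q : List V} (hc : l.IsChain G.Adj) (hnd : l.Nodup) (hl : 3 ≤ l.length)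
    (hQ : Q.IsChain G.Adj) (hQn : Q.Nodup) (hQl : Q.length = l.length + 1) :
    ∃ w ∈ Q, w ∉ l ∧ ∃ l' : List V, l'.Perm (w :: l) ∧ l'.IsChain G.Adj := by
  by_contra hcon
  have hng : ∀ w ∈ Q, w ∉ l → NotGood G w l := by
    intro w hw hwl l' hp hch
    exact hcon ⟨w, hw, hwl, l', hp, hch⟩
  have hind : ∀ w ∈ Q, w ∉ l → ∀ v ∈ Q, G.Adj w v → v ∈ l := by
    intro w hw hwl v hv hwv
    by_contra hvl
    exact comb_indep hgap hclaw hc hnd hl hwl hvl (hng w hw hwl) (hng v hv hvl) hwv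
  rcases Q with _ | ⟨q1, Q'⟩
  · simp at hQl
  rcases List.eq_nil_or_concat' Q' with rfl | ⟨M, q2, rfl⟩
  · simp only [List.length_cons, List.length_nil] at hQl; omega
  have hM : M ⊆ l := by
    intro m hm
    by_contra hml
    obtain ⟨M1, M2, rfl⟩ := List.append_of_mem hm
    have e : q1 :: (M1 ++ m :: M2 ++ [q2]) = (q1 :: M1) ++ m :: (M2 ++ [q2]) := by simp
    rw [e] at hQ hQn hng hind
    obtain ⟨x, y, hx, hy, hxy, hpx, hpy⟩ := two_nbrs hQ hQn (by simp) (by simp)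
    have hmQ : m ∈ (q1 :: M1) ++ m :: (M2 ++ [q2]) := by simp
    have hxl := hind m hmQ hml x (List.mem_append_left _ hx) hpx
    have hyl := hind m hmQ hml y (List.mem_append_right _ (List.mem_cons_of_mem _ hy)) hpy
    exact hxy (ng_unique hgap hclaw hc hnd hml (hng m hmQ hml) hpx hpy hxl hyl)
  have hlen : M.length + 1 = l.length := by simp at hQl; omega
  have hq1 : q1 ∉ l := by
    intro h
    have hperm : (q1 :: M).Perm l := by
      refine perm_of_len ?_ ?_ (by simp; omega)
      · simp [List.nodup_append] at hQn ⊢; grind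
      · intro x hx; rcases List.mem_cons.1 hx with rfl | hx
        · exact h
        · exact hM hx
    have hq2 : q2 ∉ l := by
      rw [← hperm.mem_iff]
      simp [List.nodup_append] at hQn ⊢; grind
    refine hng q2 (by simp) hq2 _ ?_ hQ
    have : (q1 :: (M ++ [q2])) = (q1 :: M) ++ [q2] := by simp
    rw [this]
    exact (List.perm_append_singleton _ _).trans (hperm.cons q2)
  have hq2 : q2 ∉ l := by
    intro h
    have hperm : (M ++ [q2]).Perm l := by
      refine perm_of_len ?_ ?_ (by simp; omega)
      · exact (List.nodup_cons.1 hQn).2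
      · intro x hx; rcases List.mem_append.1 hx with hx | hx
        · exact hM hx
        · simp at hx; exact hx ▸ h
    exact hng q1 (by simp) hq1 _ (hperm.cons q1) hQ
  have hn1 := hng q1 (by simp) hq1
  have hn2 := hng q2 (by simp) hq2
  obtain ⟨c, hcM, hwc⟩ : ∃ c ∈ M, G.Adj q1 c := by
    rcases M with _ | ⟨c, M'⟩
    · simp at hlen; omega
    · refine ⟨c, by simp, ?_⟩
      simp [List.isChain_cons_cons] at hQ
      exact hQ.1
  have hcl := hM hcM
  rcases l with _ | ⟨p, R⟩
  · simp at hl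
  rcases List.eq_nil_or_concat' R with rfl | ⟨N, r, rfl⟩
  · simp at hl
  by_cases hp : p ∈ M
  · exact comb_end hgap hclaw hc hnd hl (by simp) hQ hQn hM hq1 hq2 hn1 hn2 hwc hcl hp
  by_cases hr : r ∈ M
  · have hperm := List.reverse_perm (p :: (N ++ [r]))
    refine comb_end hgap hclaw (l := (p :: (N ++ [r])).reverse) (p := r) (chain_rev hc)
      (List.nodup_reverse.2 hnd) (by rw [List.length_reverse]; exact hl) (by simp) hQ hQn ?_ ?_ ?_
      (hn1.perm hperm) (hn2.perm hperm) hwc (hperm.mem_iff.2 hcl) hr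
    · exact fun x hx => hperm.mem_iff.2 (hM hx)
    · exact fun h => hq1 (hperm.mem_iff.1 h)
    · exact fun h => hq2 (hperm.mem_iff.1 h)
  · have hsub : M ⊆ N := by
      intro x hx
      have := hM hx
      simp at this
      rcases this with rfl | h | rfl
      · exact absurd hx hp
      · exact h
      · exact absurd hx hr
    have hMn : M.Nodup := by
      have := (List.nodup_cons.1 hQn).2
      exact (List.nodup_append.1 this).1
    have := (hMn.subperm hsub).length_le
    simp at hlen
    omega

/-! Algebraic part -/

/-- exponent vector of a list -/
noncomputable def listExp {V : Type*} (l : List V) : V →₀ ℕ :=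
  (l.map (fun v => Finsupp.single v 1)).sum

lemma listExp_prod {V K : Type*} [CommRing K] (l : List V) :
    (l.map (X : V → MvPolynomial V K)).prod = monomial (listExp l) (1 : K) := by
  induction l with
  | nil => simp [listExp]
  | cons a l ih =>
    simp only [listExp, List.map_cons, List.prod_cons, List.sum_cons] at ih ⊢
    rw [ih, X, monomial_mul, one_mul]

lemma listExp_not_mem {V : Type*} {l : List V} {w : V} (h : w ∉ l) : listExp l w = 0 := by
  induction l with
  | nil => simp [listExp]
  | cons a l ih =>
    simp only [List.mem_cons, not_or] at h
    have := ih h.2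
    simp only [listExp, List.map_cons, List.sum_cons, Finsupp.add_apply] at this ⊢
    rw [this, Finsupp.single_eq_of_ne h.1]

lemma listExp_mem {V : Type*} {l : List V} {w : V} (h : w ∈ l) : 1 ≤ listExp l w := by
  induction l with
  | nil => simp at h
  | cons a l ih =>
    rcases List.mem_cons.1 h with rfl | h
    · simp [listExp]
    · have := ih h
      simp only [listExp, List.map_cons, List.sum_cons, Finsupp.add_apply] at this ⊢
      omega

lemma mem_pathIdeal {V K : Type*} [CommRing K] (G : SimpleGraph V) (t : ℕ)
    (f : MvPolynomial V K) : f ∈ pathIdeal (K := K) G t ↔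
      ∀ m ∈ f.support, ∃ l : List V, G.IsPathList l ∧ l.length = t ∧ listExp l ≤ m := by
  have : pathIdeal (K := K) G t = Ideal.span ((fun s => monomial s (1 : K)) ''
      { m | ∃ l : List V, G.IsPathList l ∧ l.length = t ∧ m = listExp l }) := by
    unfold pathIdeal
    congr 1
    ext p
    constructor
    · rintro ⟨l, h1, h2, rfl⟩
      exact ⟨listExp l, ⟨l, h1, h2, rfl⟩, (listExp_prod l).symm⟩
    · rintro ⟨_, ⟨l, h1, h2, rfl⟩, rfl⟩
      exact ⟨l, h1, h2, (listExp_prod l).symm⟩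
  rw [this, mem_ideal_span_monomial_image]
  refine forall₂_congr fun m _ => ?_
  constructor
  · rintro ⟨_, ⟨l, h1, h2, rfl⟩, h⟩
    exact ⟨l, h1, h2, h⟩
  · rintro ⟨l, h1, h2, h⟩
    exact ⟨_, ⟨l, h1, h2, rfl⟩, h⟩

lemma path_mem {V K : Type*} [CommRing K] (G : SimpleGraph V) (t : ℕ) {l : List V}
    (h1 : G.IsPathList l) (h2 : l.length = t) :
    monomial (listExp l) (1 : K) ∈ pathIdeal (K := K) G t :=
  Ideal.subset_span ⟨l, h1, h2, (listExp_prod l).symm⟩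

/-- Let `G` be gap-free and claw-free, `t ≥ 3`, `I_t(G) ≠ 0`.  If `e` is
a minimal monomial generator of `I_t(G)`, then `(I_{t+1}(G) : e)` is generated by
variables. -/
theorem stmt12 {V K : Type*} [Fintype V] [Field K] (G : SimpleGraph V)
    (hgap : G.GapFree) (hclaw : G.ClawFree) (t : ℕ) (ht : 3 ≤ t)
    (hnz : pathIdeal (K := K) G t ≠ ⊥)
    (e : V →₀ ℕ) (hgen : IsMinimalMonomialGen (pathIdeal (K := K) G t) e) :
    ∃ s : Set V,
      Submodule.colon (pathIdeal (K := K) G (t + 1))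
          (Ideal.span {(monomial e (1 : K) : MvPolynomial V K)}) =
        Ideal.span ((fun w => (X w : MvPolynomial V K)) '' s) := by
  classical
  obtain ⟨hmem, hmin⟩ := hgen
  obtain ⟨l, hl, hlt, hle⟩ := (mem_pathIdeal G t _).1 hmem e (by
    rw [mem_support_iff, coeff_monomial, if_pos rfl]; exact one_ne_zero)
  obtain rfl : listExp l = e := by
    by_contra hne
    exact hmin _ hle hne (path_mem G t hl hlt)
  refine ⟨{w | X w * monomial (listExp l) (1 : K) ∈ pathIdeal (K := K) G (t + 1)}, ?_⟩
  apply le_antisymm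
  · intro f hf
    rw [Ideal.mem_colon_span_singleton, mem_pathIdeal] at hf
    refine mem_ideal_span_X_image.2 fun m hm => ?_
    obtain ⟨Q, hQ, hQt, hQle⟩ := hf (m + listExp l) (by
      rw [mem_support_iff, coeff_mul_monomial, mul_one]
      exact mem_support_iff.1 hm)
    obtain ⟨w, hwQ, hwl, l', hp, hch⟩ := comb_main hgap hclaw hl.1 hl.2 (by omega) hQ.1 hQ.2
      (by omega)
    refine ⟨w, ?_, ?_⟩
    · have e1 : (X w * monomial (listExp l) (1 : K) : MvPolynomial V K)
          = monomial (listExp l') (1 : K) := by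
        rw [← listExp_prod, ← listExp_prod, ← List.prod_cons, ← List.map_cons]
        exact ((hp.map _).prod_eq).symm
      show X w * monomial (listExp l) (1 : K) ∈ pathIdeal (K := K) G (t + 1)
      rw [e1]
      refine path_mem G (t + 1) ⟨hch, hp.nodup_iff.2 (List.nodup_cons.2 ⟨hwl, hl.2⟩)⟩ ?_
      rw [hp.length_eq, List.length_cons, hlt]
    · have h1 := hQle w
      have h2 := listExp_mem hwQ
      rw [Finsupp.add_apply, listExp_not_mem hwl] at h1
      omega
  · rw [Ideal.span_le]
    rintro _ ⟨w, hw, rfl⟩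
    exact Ideal.mem_colon_span_singleton.2 hw
end
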